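/- arXiv:2012.13511 — 15 statements merged into one kernel-verified Lean document; each statement's English description precedes it below -/
import Mathlib

section
/- Let 0 < r < 1 and let φ_car(z) = 1 + z + z²/2. Then the minimum of Re(φ_car(z)) over the circle |z| = r equals 1 − r + r²/2 when 0 < r ≤ 1/2 and equals (3 − 2r²)/4 when 1/2 ≤ r < 1, while the maximum of Re(φ_car(z)) over |z| = r equals 1 + r + r²/2. -/
open Complex Metric

theorem aux_set (r : ℝ) (hr0 : 0 < r) (v : ℝ) :
    v ∈ {x : ℝ | ∃ z : ℂ, ‖z‖ = r ∧ x = (1 + z + z ^ 2 / 2).re} ↔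
      ∃ a : ℝ, -r ≤ a ∧ a ≤ r ∧ v = 1 + a + a ^ 2 - r ^ 2 / 2 := by
  have key : ∀ z : ℂ, (1 + z + z ^ 2 / 2).re = 1 + z.re + (z.re ^ 2 - z.im ^ 2) / 2 := by
    intro z
    have h : (z ^ 2 / 2).re = (z ^ 2).re / 2 := by
      simpa using Complex.div_ofNat_re (z ^ 2) 2
    rw [Complex.add_re, Complex.add_re, h, pow_two z, Complex.mul_re, Complex.one_re]
    ring
  have hn : ∀ z : ℂ, ‖z‖ ^ 2 = z.re ^ 2 + z.im ^ 2 := by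
    intro z
    rw [Complex.sq_norm, Complex.normSq_apply]
    ring
  constructor
  · rintro ⟨z, hz, rfl⟩
    have h2 := hn z
    rw [hz] at h2
    have h3 := abs_le.mp (hz ▸ Complex.abs_re_le_norm z)
    refine ⟨z.re, h3.1, h3.2, ?_⟩
    rw [key]
    linarith
  · rintro ⟨a, h1, h2, rfl⟩
    have h0 : 0 ≤ r ^ 2 - a ^ 2 := by nlinarith
    have hs := Real.sq_sqrt h0
    refine ⟨⟨a, Real.sqrt (r ^ 2 - a ^ 2)⟩, ?_, ?_⟩
    · rw [← sq_eq_sq₀ (norm_nonneg _) hr0.le, hn]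
      simp only [hs]
      ring
    · rw [key]
      simp only [hs]
      ring

theorem stmt_0 (r : ℝ) (hr0 : 0 < r) (hr1 : r < 1) :
    (r ≤ 1 / 2 →
      IsLeast {x : ℝ | ∃ z : ℂ, ‖z‖ = r ∧ x = (1 + z + z ^ 2 / 2).re} (1 - r + r ^ 2 / 2)) ∧
    (1 / 2 ≤ r →
      IsLeast {x : ℝ | ∃ z : ℂ, ‖z‖ = r ∧ x = (1 + z + z ^ 2 / 2).re} ((3 - 2 * r ^ 2) / 4)) ∧
    IsGreatest {x : ℝ | ∃ z : ℂ, ‖z‖ = r ∧ x = (1 + z + z ^ 2 / 2).re} (1 + r + r ^ 2 / 2) := by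
  refine ⟨fun h => ⟨?_, fun v hv => ?_⟩, fun h => ⟨?_, fun v hv => ?_⟩, ?_, fun v hv => ?_⟩
  · exact (aux_set r hr0 _).2 ⟨-r, by linarith, by linarith, by ring⟩
  · obtain ⟨a, h1, h2, rfl⟩ := (aux_set r hr0 v).1 hv
    nlinarith [mul_nonneg (by linarith : 0 ≤ a + r) (by linarith : 0 ≤ 1 + a - r)]
  · exact (aux_set r hr0 _).2 ⟨-1 / 2, by linarith, by linarith, by ring⟩
  · obtain ⟨a, h1, h2, rfl⟩ := (aux_set r hr0 v).1 hv
    nlinarith [sq_nonneg (a + 1 / 2)]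
  · exact (aux_set r hr0 _).2 ⟨r, by linarith, by linarith, by ring⟩
  · obtain ⟨a, h1, h2, rfl⟩ := (aux_set r hr0 v).1 hv
    nlinarith [mul_nonneg (by linarith : 0 ≤ r - a) (by linarith : 0 ≤ 1 + a + r)]
end

section
/- Let 1/2 < a < 5/2 be real and define r_a = a − 1/2 if 1/2 < a ≤ 3/2 and r_a = 5/2 − a if 3/2 ≤ a < 5/2 (equivalently r_a = min(a − 1/2, 5/2 − a)). Then the open disk {w ∈ ℂ : |w − a| < r_a} is contained in Ω_car. -/
open Complex Metric

def omegaCar : Set ℂ := {w : ℂ | ∃ u : ℂ, ‖u‖ < 1 ∧ w = 1 + u + u ^ 2 / 2}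

def SCar (f : ℂ → ℂ) : Prop :=
  DifferentiableOn ℂ f (Metric.ball (0 : ℂ) 1) ∧ f 0 = 0 ∧ deriv f 0 = 1 ∧
    (∀ z : ℂ, ‖z‖ < 1 → z ≠ 0 → f z ≠ 0) ∧
    (∀ z : ℂ, ‖z‖ < 1 → z ≠ 0 → z * deriv f z / f z ∈ omegaCar)

theorem stmt_1 (a : ℝ) (h1 : 1 / 2 < a) (h2 : a < 5 / 2) :
    Metric.ball (a : ℂ) (min (a - 1 / 2) (5 / 2 - a)) ⊆ omegaCar := by
  intro w hw
  have hr : ‖w - (3 / 2 : ℝ)‖ < 1 := by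
    rw [Metric.mem_ball, dist_eq_norm, lt_min_iff] at hw
    have e : w - ((3 / 2 : ℝ) : ℂ) = (w - a) + ((a - 3 / 2 : ℝ) : ℂ) := by
      push_cast; ring
    have h3 := norm_add_le (w - a) ((a - 3 / 2 : ℝ) : ℂ)
    rw [← e, Complex.norm_real, Real.norm_eq_abs] at h3
    rcases abs_cases (a - 3 / 2) with h | h <;> linarith [hw.1, hw.2]
  have key : ∀ s : ℂ, s ^ 2 = 2 * w - 1 → 0 ≤ s.re → w ∈ omegaCar := by
    intro s hs hx
    refine ⟨s - 1, ?_, ?_⟩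
    · have hw2 : w - ((3 / 2 : ℝ) : ℂ) = (s ^ 2 - 2) / 2 := by
        rw [hs]; push_cast; ring
      have h4 : ‖s ^ 2 - 2‖ < 2 := by
        rw [hw2, norm_div] at hr
        norm_num at hr
        linarith
      have h5 : ‖s ^ 2 - 2‖ ^ 2 < 4 := by nlinarith [norm_nonneg (s ^ 2 - 2)]
      rw [Complex.sq_norm, Complex.normSq_apply] at h5
      simp [pow_two] at h5
      have h6 : (s.re ^ 2 + s.im ^ 2) ^ 2 < (2 * s.re) ^ 2 := by
        nlinarith [sq_nonneg s.im]
      have h7 : s.re ^ 2 + s.im ^ 2 < 2 * s.re := lt_of_pow_lt_pow_left₀ 2 (by linarith) h6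
      have h8 : ‖s - 1‖ ^ 2 < 1 := by
        rw [Complex.sq_norm, Complex.normSq_apply]
        simp
        nlinarith
      nlinarith [norm_nonneg (s - 1)]
    · linear_combination (-1 / 2 : ℂ) * hs
  obtain ⟨s, hs⟩ := IsAlgClosed.exists_pow_nat_eq (2 * w - 1) (n := 2) (by norm_num)
  rcases le_total 0 s.re with h | h
  · exact key s hs h
  · exact key (-s) (by rw [neg_sq, hs]) (by simpa using h)
end

section
/- Let 1/2 < a < 5/2 be real and define R_a = 5/2 − a if 1/2 < a ≤ 7/6 and R_a = √((2a − 1)³/(8(a − 1))) if 7/6 ≤ a < 5/2. Then Ω_car is contained in the open disk {w ∈ ℂ : |w − a| < R_a}. -/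
open Complex Metric

theorem stmt_2 (a : ℝ) (h1 : 1 / 2 < a) (h2 : a < 5 / 2) (Ra : ℝ)
    (hRa : Ra = if a ≤ 7 / 6 then 5 / 2 - a
      else Real.sqrt ((2 * a - 1) ^ 3 / (8 * (a - 1)))) :
    omegaCar ⊆ Metric.ball (a : ℂ) Ra := by
  rintro w ⟨u, hu, rfl⟩
  rw [Metric.mem_ball, dist_eq_norm]
  obtain ⟨x, y⟩ := u
  have hs : x ^ 2 + y ^ 2 < 1 := by
    have h : ‖(⟨x, y⟩ : ℂ)‖ ^ 2 = x ^ 2 + y ^ 2 := by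
      rw [← Complex.normSq_eq_norm_sq, Complex.normSq_mk]; ring
    rw [← h]
    have := norm_nonneg (⟨x, y⟩ : ℂ)
    nlinarith
  have hN : ‖(1 + (⟨x, y⟩ : ℂ) + (⟨x, y⟩ : ℂ) ^ 2 / 2 - (a : ℂ))‖ ^ 2
      = (1 + x + (x ^ 2 - y ^ 2) / 2 - a) ^ 2 + (y + x * y) ^ 2 := by
    have h : (1 + (⟨x, y⟩ : ℂ) + (⟨x, y⟩ : ℂ) ^ 2 / 2 - (a : ℂ))
        = ⟨1 + x + (x ^ 2 - y ^ 2) / 2 - a, y + x * y⟩ := by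
      apply Complex.ext
      · simp [pow_two]
      · simp [pow_two]; ring
    rw [h, ← Complex.normSq_eq_norm_sq, Complex.normSq_mk]; ring
  have hx1 : x < 1 := by nlinarith [sq_nonneg y]
  have hx2 : -1 < x := by nlinarith [sq_nonneg y]
  have hF : (1 + x + (x ^ 2 - y ^ 2) / 2 - a) ^ 2 + (y + x * y) ^ 2
      < (1 - a) ^ 2 + 5 / 4 - (1 - a) + (2 * (1 - a) + 1) * x + 2 * (1 - a) * x ^ 2 := by
    have hp : 0 < a + x + (1 + (x ^ 2 + y ^ 2)) / 4 := by
      nlinarith [sq_nonneg y, mul_pos (by linarith : 0 < x + 1) (by linarith : 0 < x + 3)]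
    have := mul_pos (sub_pos.2 hs) hp
    nlinarith
  rw [← hN] at hF
  split_ifs at hRa with h
  · subst hRa
    apply lt_of_pow_lt_pow_left₀ 2 (by linarith)
    refine hF.trans_le ?_
    have hq : 0 ≤ 1 + 4 * (1 - a) + 2 * (1 - a) * x := by
      rcases le_total a 1 with h' | h' <;> nlinarith
    nlinarith [mul_nonneg (sub_nonneg.2 hx1.le) hq]
  · subst hRa
    push Not at h
    apply Real.lt_sqrt_of_sq_lt
    refine hF.trans_le ?_
    have ha : 0 < 8 * (a - 1) := by linarith
    rw [le_div_iff₀ ha]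
    nlinarith [sq_nonneg (4 * (a - 1) * x - (3 - 2 * a))]
end

section
/- Let f ∈ S*_car with Taylor expansion f(z) = z + Σ_{n≥2} a_n zⁿ on 𝔻, and let g be analytic on 𝔻 with g(0) = 0, g'(0) = 1, g'(z) ≠ 0 on 𝔻 and Re(1 + z g''(z)/g'(z)) > 0 for all z ∈ 𝔻 (i.e. g is a normalized convex function), with Taylor expansion g(z) = z + Σ_{n≥2} b_n zⁿ. Let f∗g denote the Hadamard product (f∗g)(z) = z + Σ_{n≥2} a_n b_n zⁿ. Then for every 0 < ρ ≤ 1/2 the function z ↦ (f∗g)(ρz)/ρ belongs to S*_car. -/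
open Complex Metric

def Kset : Set ℂ := {w : ℂ | ‖2 * w - 1‖ ^ 2 - ‖2 * w - 1‖ / 2 + 9 / 16 ≤ 2 * (2 * w - 1).re}

lemma Kset_re {w : ℂ} (h : w ∈ Kset) : 1 / 4 ≤ (2 * w - 1).re := by
  have h' : ‖2 * w - 1‖ ^ 2 - ‖2 * w - 1‖ / 2 + 9 / 16 ≤ 2 * (2 * w - 1).re := h
  nlinarith [sq_nonneg (‖2 * w - 1‖ - 1 / 4)]

lemma Kset_re' {w : ℂ} (h : w ∈ Kset) : 5 / 8 ≤ w.re := by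
  have := Kset_re h
  simp at this
  linarith

lemma Kset_convex : Convex ℝ Kset := by
  intro x hx y hy a b ha hb hab
  have hx1 := Kset_re hx
  have hy1 := Kset_re hy
  have hx' : ‖2 * x - 1‖ ^ 2 - ‖2 * x - 1‖ / 2 + 9 / 16 ≤ 2 * (2 * x - 1).re := hx
  have hy' : ‖2 * y - 1‖ ^ 2 - ‖2 * y - 1‖ / 2 + 9 / 16 ≤ 2 * (2 * y - 1).re := hy
  have e : 2 * (a • x + b • y) - 1 = (a : ℂ) * (2 * x - 1) + (b : ℂ) * (2 * y - 1) := by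
    have : (a : ℂ) + b = 1 := by exact_mod_cast hab
    simp only [real_smul]
    linear_combination this
  show ‖2 * (a • x + b • y) - 1‖ ^ 2 - ‖2 * (a • x + b • y) - 1‖ / 2 + 9 / 16 ≤
    2 * (2 * (a • x + b • y) - 1).re
  rw [e]
  generalize 2 * x - 1 = u at *
  generalize 2 * y - 1 = v at *
  have hre : ((a : ℂ) * u + (b : ℂ) * v).re = a * u.re + b * v.re := by simp
  have hn : ‖(a : ℂ) * u + (b : ℂ) * v‖ ≤ a * ‖u‖ + b * ‖v‖ := by
    refine (norm_add_le _ _).trans ?_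
    simp [abs_of_nonneg ha, abs_of_nonneg hb]
  have hl : 1 / 4 ≤ ‖(a : ℂ) * u + (b : ℂ) * v‖ := by
    refine le_trans ?_ (re_le_norm _)
    rw [hre]; nlinarith
  rw [hre]
  generalize ‖(a : ℂ) * u + (b : ℂ) * v‖ = n at *
  have hb' : b = 1 - a := by linarith
  subst hb'
  have : (a * ‖u‖ + (1 - a) * ‖v‖) ^ 2 ≤ a * ‖u‖ ^ 2 + (1 - a) * ‖v‖ ^ 2 := by
    nlinarith [mul_nonneg (mul_nonneg ha hb) (sq_nonneg (‖u‖ - ‖v‖))]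
  have h3 : n ^ 2 - n / 2 ≤ (a * ‖u‖ + (1 - a) * ‖v‖) ^ 2 - (a * ‖u‖ + (1 - a) * ‖v‖) / 2 := by
    nlinarith
  nlinarith

lemma Kset_closed : IsClosed Kset := by
  refine isClosed_le ?_ ?_ <;> fun_prop

lemma mem_Kset {u : ℂ} (hu : ‖u‖ ≤ 1 / 2) : 1 + u + u ^ 2 / 2 ∈ Kset := by
  show ‖2 * (1 + u + u ^ 2 / 2) - 1‖ ^ 2 - ‖2 * (1 + u + u ^ 2 / 2) - 1‖ / 2 + 9 / 16 ≤
    2 * (2 * (1 + u + u ^ 2 / 2) - 1).re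
  have e : 2 * (1 + u + u ^ 2 / 2) - 1 = (1 + u) ^ 2 := by ring
  rw [e, norm_pow]
  have h1 : ‖1 + u‖ ^ 2 = (1 + u.re) ^ 2 + u.im ^ 2 := by
    rw [Complex.sq_norm, normSq_apply]; simp; ring
  have h2 : ‖u‖ ^ 2 = u.re ^ 2 + u.im ^ 2 := by
    rw [Complex.sq_norm, normSq_apply]; ring
  have h3 : ((1 + u) ^ 2).re = (1 + u.re) ^ 2 - u.im ^ 2 := by
    simp [pow_two]
  have h4 : u.re ^ 2 + u.im ^ 2 ≤ 1 / 4 := by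
    rw [← h2]; nlinarith [norm_nonneg u]
  rw [h1, h3]
  nlinarith [sq_nonneg u.im, sq_nonneg u.re]

lemma Kset_sub {w : ℂ} (h : w ∈ Kset) : w ∈ omegaCar := by
  have h' : ‖2 * w - 1‖ ^ 2 - ‖2 * w - 1‖ / 2 + 9 / 16 ≤ 2 * (2 * w - 1).re := h
  obtain ⟨s, hs, hre⟩ : ∃ s : ℂ, s ^ 2 = 2 * w - 1 ∧ 0 ≤ s.re := by
    obtain ⟨s, hs⟩ := IsAlgClosed.exists_pow_nat_eq (2 * w - 1) (n := 2) (by norm_num)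
    rcases le_total 0 s.re with h | h
    · exact ⟨s, hs, h⟩
    · exact ⟨-s, by simpa using hs, by simpa using h⟩
  rw [← hs, norm_pow] at h'
  have h1 : ‖s‖ ^ 2 = s.re ^ 2 + s.im ^ 2 := by
    rw [Complex.sq_norm, normSq_apply]; ring
  have h3 : (s ^ 2).re = s.re ^ 2 - s.im ^ 2 := by
    simp [pow_two]
  have h2 : ‖s - 1‖ ^ 2 = (s.re - 1) ^ 2 + s.im ^ 2 := by
    rw [Complex.sq_norm, normSq_apply]; simp; ring
  rw [h1, h3] at h'
  have h5 : s.re ^ 2 + s.im ^ 2 + 3 / 4 ≤ 2 * s.re := by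
    refine (sq_le_sq₀ (by positivity) (by linarith)).1 ?_
    nlinarith
  refine ⟨s - 1, ?_, ?_⟩
  · have : ‖s - 1‖ ^ 2 < 1 := by rw [h2]; nlinarith
    nlinarith [norm_nonneg (s - 1)]
  · linear_combination -hs / 2

lemma jack {w : ℂ → ℂ} (hw : DifferentiableOn ℂ w (ball 0 1)) (h0 : w 0 = 0) {z1 : ℂ}
    (hz1 : ‖z1‖ < 1) (h1 : 1 ≤ ‖w z1‖) :
    ∃ z0 : ℂ, ‖z0‖ < 1 ∧ ‖w z0‖ = 1 ∧ ∃ k : ℝ, 1 ≤ k ∧ z0 * deriv w z0 = k * w z0 := by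
  have hsub : closedBall (0 : ℂ) ‖z1‖ ⊆ ball 0 1 := closedBall_subset_ball hz1
  have hcomp : IsCompact (closedBall (0 : ℂ) ‖z1‖ ∩ (fun z => ‖w z‖) ⁻¹' Set.Ici 1) := by
    refine (isCompact_closedBall (0 : ℂ) ‖z1‖).of_isClosed_subset ?_ Set.inter_subset_left
    exact ContinuousOn.preimage_isClosed_of_isClosed
      (hw.continuousOn.mono hsub).norm isClosed_closedBall isClosed_Ici
  obtain ⟨z0, ⟨hz0b, hz0w⟩, hmin⟩ := hcomp.exists_isMinOn ⟨z1, by simp, h1⟩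
    (continuous_norm.continuousOn)
  have hz0b' : ‖z0‖ ≤ ‖z1‖ := by simpa using hz0b
  have hz0w' : 1 ≤ ‖w z0‖ := hz0w
  have hz01 : ‖z0‖ < 1 := hz0b'.trans_lt hz1
  have hz0 : z0 ≠ 0 := by
    rintro rfl
    rw [h0] at hz0w'; simp at hz0w'; linarith
  have hpos : 0 < ‖z0‖ := norm_pos_iff.2 hz0
  have hlt : ∀ z, ‖z‖ < ‖z0‖ → ‖w z‖ ≤ 1 := by
    intro z hz
    by_contra! hc
    have := hmin (show z ∈ closedBall (0 : ℂ) ‖z1‖ ∩ (fun z => ‖w z‖) ⁻¹' Set.Ici 1 from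
      ⟨by simpa using hz.le.trans hz0b', hc.le⟩)
    simp at this
    linarith
  have hmaps : Set.MapsTo w (ball 0 ‖z0‖) (closedBall 0 1) := by
    intro z hz
    simpa using hlt z (by simpa using hz)
  have hd0 : DifferentiableOn ℂ w (ball 0 ‖z0‖) := hw.mono (ball_subset_ball hz01.le)
  have hschw : ∀ z, ‖z‖ < ‖z0‖ → ‖w z‖ ≤ ‖z‖ / ‖z0‖ := by
    intro z hz
    have := Complex.dist_le_div_mul_dist_of_mapsTo_ball (z := z) hd0 (by rw [h0]; exact hmaps)
      (by simpa using hz)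
    rw [h0] at this
    simp at this
    rw [div_eq_inv_mul]; exact this
  have hcl : ∀ z, ‖z‖ ≤ ‖z0‖ → ‖w z‖ ≤ 1 := by
    intro z hz
    have hc : closure (ball (0 : ℂ) ‖z0‖) = closedBall 0 ‖z0‖ := closure_ball _ hpos.ne'
    have := hmaps.closure_of_continuousOn (hw.continuousOn.mono (by
      rw [hc]; exact closedBall_subset_ball hz01))
    rw [hc, isClosed_closedBall.closure_eq] at this
    simpa using this (show z ∈ closedBall 0 ‖z0‖ by simpa using hz)
  have hw1 : ‖w z0‖ = 1 := le_antisymm (hcl z0 le_rfl) hz0w'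
  refine ⟨z0, hz01, hw1, ?_⟩
  have hwd : HasDerivAt w (deriv w z0) z0 :=
    (hw.differentiableAt (isOpen_ball.mem_nhds (by simpa using hz01))).hasDerivAt
  set c := (starRingEnd ℂ) (w z0) with hc
  have hcw : c * w z0 = 1 := by
    rw [hc, mul_comm, mul_conj, normSq_eq_norm_sq, hw1]; simp
  have hcn : ‖c‖ = 1 := by rw [hc, norm_conj, hw1]
  set d := c * (z0 * deriv w z0) with hd
  have hu : HasDerivAt (fun ξ : ℂ => c * w (z0 * ξ)) d 1 := by
    have h2 : HasDerivAt (fun ξ : ℂ => z0 * ξ) z0 1 := by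
      simpa using (hasDerivAt_id (1 : ℂ)).const_mul z0
    have h3 : HasDerivAt w (deriv w z0) (z0 * 1) := by simpa using hwd
    have := (h3.comp (1 : ℂ) h2).const_mul c
    rw [hd, mul_comm z0]
    exact this
  have hr : 1 ≤ d.re := by
    have h2 : HasDerivAt (fun s : ℝ => (c * w (z0 * (s : ℂ))).re - s) (d.re - 1) 1 := by
      have : HasDerivAt (fun ξ : ℂ => c * w (z0 * ξ)) d ((1 : ℝ) : ℂ) := by simpa using hu
      exact this.real_of_complex.sub (hasDerivAt_id 1)
    have hle : nhdsWithin (1 : ℝ) (Set.Iio 1) ≤ nhdsWithin 1 {1}ᶜ :=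
      nhdsWithin_mono (1 : ℝ) (fun x (hx : x < 1) => hx.ne)
    have h3 := h2.tendsto_slope.mono_left hle
    have h4 : 0 ≤ d.re - 1 := by
      refine ge_of_tendsto h3 ?_
      filter_upwards [Ioo_mem_nhdsLT (show (0 : ℝ) < 1 by norm_num)] with s hs
      rw [slope_def_field]
      have h5 : (c * w (z0 * (s : ℂ))).re ≤ s := by
        refine (re_le_norm _).trans ?_
        rw [norm_mul, hcn, one_mul]
        have hn : ‖z0 * (s : ℂ)‖ = ‖z0‖ * s := by
          rw [norm_mul, norm_real, Real.norm_of_nonneg hs.1.le]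
        refine (hschw _ ?_).trans ?_
        · rw [hn]; nlinarith [hs.2]
        · rw [hn]; field_simp; exact le_rfl
      have h6 : (c * w (z0 * ((1 : ℝ) : ℂ))).re = 1 := by simp [hcw]
      rw [h6]
      apply div_nonneg_of_nonpos <;> linarith [hs.2]
    linarith
  have hi : d.im = 0 := by
    have h2 : HasDerivAt (fun t : ℝ => (c * w (z0 * exp (t * I))).re) (d * I).re 0 := by
      have he : HasDerivAt (fun t : ℂ => exp (t * I)) I ((0 : ℝ) : ℂ) := by
        have := ((hasDerivAt_id ((0 : ℝ) : ℂ)).mul_const I).cexp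
        simpa using this
      have hu' : HasDerivAt (fun ξ : ℂ => c * w (z0 * ξ)) d (exp (((0 : ℝ) : ℂ) * I)) := by
        simpa using hu
      exact (HasDerivAt.comp ((0 : ℝ) : ℂ) hu' he).real_of_complex
    have h3 : IsLocalMax (fun t : ℝ => (c * w (z0 * exp (t * I))).re) 0 := by
      refine Filter.Eventually.of_forall fun t => ?_
      have h6 : (c * w (z0 * exp (((0 : ℝ) : ℂ) * I))).re = 1 := by simp [hcw]
      simp only []
      rw [h6]
      refine (re_le_norm _).trans ?_
      rw [norm_mul, hcn, one_mul]
      refine hcl _ ?_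
      rw [norm_mul, norm_exp_ofReal_mul_I, mul_one]
    have h4 := h3.hasDerivAt_eq_zero h2
    simpa using h4
  refine ⟨d.re, hr, ?_⟩
  have hdd : ((d.re : ℝ) : ℂ) = d := Complex.ext (by simp) (by simp [hi])
  rw [hdd, hd]
  linear_combination -(z0 * deriv w z0) * hcw

lemma marx {g : ℂ → ℂ} (hgd : DifferentiableOn ℂ g (ball 0 1)) (hg0 : g 0 = 0)
    (hgconv : ∀ z : ℂ, ‖z‖ < 1 → deriv g z ≠ 0 ∧
      0 < (1 + z * deriv (deriv g) z / deriv g z).re) :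
    ∀ z : ℂ, ‖z‖ < 1 → ‖1 - dslope g 0 z / deriv g z‖ < 1 := by
  have hd1 : DifferentiableOn ℂ (deriv g) (ball 0 1) := hgd.deriv isOpen_ball
  have hG : DifferentiableOn ℂ (dslope g 0) (ball 0 1) :=
    (Complex.differentiableOn_dslope (isOpen_ball.mem_nhds (by simp))).2 hgd
  have hw : DifferentiableOn ℂ (fun z => 1 - dslope g 0 z / deriv g z) (ball 0 1) :=
    (differentiableOn_const _).sub (hG.div hd1 fun z hz => (hgconv z (by simpa using hz)).1)
  set w := (fun z => 1 - dslope g 0 z / deriv g z) with hwdef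
  intro z1 hz1
  by_contra! hc
  have hw0 : w 0 = 0 := by
    have := (hgconv 0 (by simp)).1
    simp [hwdef, this]
  obtain ⟨z0, hz0, hn, k, hk, hkw⟩ := jack hw hw0 hz1 hc
  have hmem : ball (0 : ℂ) 1 ∈ nhds z0 := isOpen_ball.mem_nhds (by simpa using hz0)
  obtain ⟨hne, hpos⟩ := hgconv z0 hz0
  have hid : ∀ᶠ z in nhds z0, g z = z * deriv g z * (1 - w z) := by
    filter_upwards [hmem] with z hz
    have h1 := (hgconv z (by simpa using hz)).1
    have h2 : z * dslope g 0 z = g z := by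
      have := sub_smul_dslope g 0 z
      simpa [hg0] using this
    simp only [hwdef]
    field_simp
    rw [← h2]; ring
  have hda : HasDerivAt g (deriv g z0) z0 := (hgd.differentiableAt hmem).hasDerivAt
  have hdb : HasDerivAt (deriv g) (deriv (deriv g) z0) z0 := (hd1.differentiableAt hmem).hasDerivAt
  have hdw : HasDerivAt w (deriv w z0) z0 := (hw.differentiableAt hmem).hasDerivAt
  have hprod := ((hasDerivAt_id z0).mul hdb).mul (hdw.const_sub 1)
  have heq := hda.unique (hprod.congr_of_eventuallyEq hid)
  simp at heq
  have hmain : (1 - w z0) * (1 + z0 * deriv (deriv g) z0 / deriv g z0) = 1 + k * w z0 := by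
    rw [← hkw]
    field_simp
    linear_combination -heq
  set W := w z0 with hW
  set X := 1 + z0 * deriv (deriv g) z0 / deriv g z0 with hX
  have hWn : W.re ^ 2 + W.im ^ 2 = 1 := by
    have : ‖W‖ ^ 2 = W.re * W.re + W.im * W.im := by rw [Complex.sq_norm, normSq_apply]
    rw [hn] at this; linarith
  have e1 := congrArg Complex.re hmain
  have e2 := congrArg Complex.im hmain
  simp at e1 e2
  have hWre : W.re ≤ 1 := by nlinarith [sq_nonneg W.im]
  have e3 : ((1 - W.re) ^ 2 + W.im ^ 2) * X.re = (1 - k) * (1 - W.re) := by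
    linear_combination (1 - W.re) * e1 - W.im * e2 - k * hWn
  have h4 : (1 - k) * (1 - W.re) ≤ 0 := by nlinarith
  have h5 : (1 - W.re) ^ 2 + W.im ^ 2 ≤ 0 := by
    by_contra! h
    nlinarith [mul_pos h hpos]
  have h6 : W.re = 1 := by nlinarith [sq_nonneg W.im, sq_nonneg (1 - W.re)]
  have h7 : W.im = 0 := by
    rw [h6] at h5
    nlinarith [sq_nonneg W.im]
  rw [h6, h7] at e1
  simp at e1
  linarith

lemma twoPoint {f p : ℂ → ℂ} (hp : DiffContOnCl ℂ p (ball 0 1)) (hp0 : p 0 = 1)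
    (hre : ∀ z, ‖z‖ = 1 → 1 / 2 < (p z).re) (hf : ∀ z, ‖z‖ = 1 → f z ≠ 0)
    (hd : ∀ z, ‖z‖ = 1 → HasDerivAt f (p z * f z / z) z) (z ζ : ℂ) (hz : ‖z‖ = 1)
    (hζ : ‖ζ‖ = 1) (hne : z ≠ ζ) : 0 < ((ζ / z - 1) * (f z / f ζ)).re := by
  have hζ0 : ζ ≠ 0 := by rintro rfl; simp at hζ
  have hz0 : z ≠ 0 := by rintro rfl; simp at hz
  obtain ⟨δ, hδ0, hδ1, hδ⟩ : ∃ δ : ℝ, 0 < δ ∧ δ < 2 * Real.pi ∧ z = ζ * exp (δ * I) := by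
    have hn : ‖z / ζ‖ = 1 := by simp [hz, hζ]
    have he : z = ζ * exp (arg (z / ζ) * I) := by
      have := norm_mul_exp_arg_mul_I (z / ζ)
      rw [hn] at this
      simp only [ofReal_one, one_mul] at this
      rw [this]; field_simp
    rcases lt_trichotomy 0 (arg (z / ζ)) with h | h | h
    · exact ⟨arg (z / ζ), h, by linarith [arg_le_pi (z / ζ), Real.pi_pos], he⟩
    · rw [← h] at he; simp at he; exact absurd he hne
    · refine ⟨arg (z / ζ) + 2 * Real.pi, by linarith [neg_pi_lt_arg (z / ζ), Real.pi_pos],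
        by linarith, ?_⟩
      push_cast
      rw [add_mul, exp_add, exp_two_pi_mul_I, mul_one]
      exact he
  have hγn : ∀ s : ℝ, ‖ζ * exp (s * I)‖ = 1 := fun s => by
    rw [norm_mul, norm_exp_ofReal_mul_I, hζ, mul_one]
  have hpc : ContinuousOn p (closedBall 0 1) := by
    have := hp.2
    rwa [closure_ball _ (by norm_num)] at this
  set P : ℝ → ℂ := fun s => p (ζ * exp (s * I)) with hP
  have hPc : Continuous P := by
    refine hpc.comp_continuous (by fun_prop) fun s => ?_
    simp only [mem_closedBall, dist_zero_right]
    exact (hγn s).le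
  set J : ℝ → ℂ := fun s => ∫ t in (0 : ℝ)..s, P t with hJ
  have hJd : ∀ s, HasDerivAt J (P s) s := fun s =>
    intervalIntegral.integral_hasDerivAt_right (hPc.intervalIntegrable _ _)
      hPc.aestronglyMeasurable.stronglyMeasurableAtFilter hPc.continuousAt
  have hγd : ∀ s : ℝ, HasDerivAt (fun s : ℝ => ζ * exp (s * I)) (ζ * exp (s * I) * I) s := by
    intro s
    have h1 : HasDerivAt (fun t : ℂ => ζ * exp (t * I)) (ζ * (exp (s * I) * (1 * I))) (s : ℂ) :=
      (((hasDerivAt_id (s : ℂ)).mul_const I).cexp).const_mul ζ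
    have := h1.comp_ofReal
    rw [one_mul, ← mul_assoc] at this
    exact this
  have hconst : ∀ s : ℝ, f (ζ * exp (s * I)) * exp (-(I * J s)) = f ζ := by
    have hder : ∀ s : ℝ, HasDerivAt (fun s : ℝ => f (ζ * exp (s * I)) * exp (-(I * J s))) 0 s := by
      intro s
      have h1 := (HasDerivAt.scomp s (hd _ (hγn s)) (hγd s))
      have h2 := ((hJd s).const_mul I).neg.cexp
      have h3 := h1.mul h2
      have hne0 : ζ * exp (s * I) ≠ 0 := mul_ne_zero hζ0 (exp_ne_zero _)
      refine h3.congr_deriv ?_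
      simp only [hP, Function.comp, smul_eq_mul]
      field_simp
      ring
    intro s
    have := is_const_of_deriv_eq_zero (f := fun s : ℝ => f (ζ * exp (s * I)) * exp (-(I * J s)))
      (fun s => (hder s).differentiableAt) (fun s => (hder s).deriv) s 0
    simpa [hJ] using this
  have hfz : f z / f ζ = exp (I * J δ) := by
    have h1 := hconst δ
    rw [← hδ] at h1
    have h2 := hf ζ hζ
    rw [← h1, exp_neg]
    have h3 := hf z hz
    have h4 := exp_ne_zero (I * J δ)
    field_simp
  have htot : J (2 * Real.pi) = 2 * Real.pi := by
    have hq : DiffContOnCl ℂ (fun x => p (ζ * x)) (ball 0 |1|) := by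
      rw [abs_one]
      have hl : DiffContOnCl ℂ (fun x : ℂ => ζ * x) (ball 0 1) :=
        Differentiable.diffContOnCl (by fun_prop)
      refine hp.comp hl ?_
      intro x hx
      simpa [hζ] using hx
    have := hq.circleAverage
    rw [Real.circleAverage_def] at this
    simp only [circleMap, mul_zero, hp0, zero_add, ofReal_one, one_mul] at this
    have h2 : J (2 * Real.pi) = (2 * Real.pi : ℝ) • ((2 * Real.pi)⁻¹ • J (2 * Real.pi)) := by
      rw [smul_smul, mul_inv_cancel₀ (by positivity), one_smul]
    rw [h2]
    simp only [hJ, hP]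
    rw [this]
    simp
  have hrec : Continuous fun s => (P s).re := continuous_re.comp hPc
  have hJre : ∀ a b : ℝ, (∫ t in a..b, P t).re = ∫ t in a..b, (P t).re := by
    intro a b
    have := reCLM.intervalIntegral_comp_comm (hPc.intervalIntegrable a b)
      (μ := MeasureTheory.volume)
    simpa using this.symm
  have hlow : ∀ a b : ℝ, a < b → (b - a) / 2 < (∫ t in a..b, P t).re := by
    intro a b hab
    rw [hJre]
    have h1 : ∫ t in a..b, (1 / 2 : ℝ) = (b - a) / 2 := by
      simp; ring
    rw [← h1]
    refine intervalIntegral.integral_lt_integral_of_continuousOn_of_le_of_exists_lt hab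
      continuousOn_const hrec.continuousOn (fun x _ => (hre _ (hγn x)).le) ⟨a, ?_, hre _ (hγn a)⟩
    exact ⟨le_rfl, hab.le⟩
  have hm1 : δ / 2 < (J δ).re := by simpa using hlow 0 δ hδ0
  have hm2 : (J δ).re < Real.pi + δ / 2 := by
    have h1 := hlow δ (2 * Real.pi) hδ1
    have h2 : J δ + ∫ t in δ..(2 * Real.pi), P t = J (2 * Real.pi) :=
      intervalIntegral.integral_add_adjacent_intervals (hPc.intervalIntegrable _ _)
        (hPc.intervalIntegrable _ _)
    rw [htot] at h2
    have h3 := congrArg Complex.re h2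
    simp at h3
    linarith
  set m := (J δ).re with hm
  have hfin : ((ζ / z - 1) * (f z / f ζ)).re =
      Real.exp (-(J δ).im) * (2 * Real.sin (m - δ / 2) * Real.sin (δ / 2)) := by
    have h1 : ζ / z = exp (-(δ * I)) := by
      rw [hδ, exp_neg]; field_simp
    rw [hfz, h1, sub_mul, one_mul, ← exp_add, sub_re, exp_re, exp_re]
    have e1 : (-(δ * I) + I * J δ).re = -(J δ).im := by simp
    have e2 : (-(δ * I) + I * J δ).im = m - δ := by simp [hm]; ring
    have e3 : (I * J δ).re = -(J δ).im := by simp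
    have e4 : (I * J δ).im = m := by simp [hm]
    rw [e1, e2, e3, e4, ← mul_sub]
    congr 1
    have e5 : m - δ = (m - δ / 2) - δ / 2 := by ring
    have e6 : m = (m - δ / 2) + δ / 2 := by ring
    rw [e5]
    conv_lhs => rw [e6]
    rw [show m - δ / 2 + δ / 2 - δ / 2 = m - δ / 2 by ring] 
    rw [Real.cos_add, Real.cos_sub]
    ring
  rw [hfin]
  have s1 : 0 < Real.sin (m - δ / 2) := Real.sin_pos_of_pos_of_lt_pi (by linarith) (by linarith)
  have s2 : 0 < Real.sin (δ / 2) := Real.sin_pos_of_pos_of_lt_pi (by linarith) (by linarith)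
  positivity

noncomputable def PS (c : ℕ → ℂ) (z : ℂ) : ℂ := ∑' n : ℕ, c n * z ^ n

noncomputable def av (φ : ℝ → ℂ) : ℂ := (2 * Real.pi : ℂ)⁻¹ * ∫ θ in (0 : ℝ)..(2 * Real.pi), φ θ

noncomputable def ee (θ : ℝ) : ℂ := exp (θ * I)
noncomputable def eb (θ : ℝ) : ℂ := exp (-(θ * I))

lemma ee_cont : Continuous ee := by unfold ee; fun_prop
lemma eb_cont : Continuous eb := by unfold eb; fun_prop
lemma ee_norm (θ : ℝ) : ‖ee θ‖ = 1 := norm_exp_ofReal_mul_I θ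
lemma eb_norm (θ : ℝ) : ‖eb θ‖ = 1 := by
  have := norm_exp_ofReal_mul_I (-θ)
  simpa [eb] using this
lemma ee_mul_eb (θ : ℝ) : ee θ * eb θ = 1 := by
  rw [ee, eb, ← exp_add]; simp
lemma conj_eb (θ : ℝ) : (starRingEnd ℂ) (eb θ) = ee θ := by
  rw [ee, eb, ← exp_conj]; simp

lemma PS_bound {c : ℕ → ℂ} {z : ℂ} (hz : ‖z‖ ≤ 1) (n : ℕ) : ‖c n * z ^ n‖ ≤ ‖c n‖ := by
  rw [norm_mul, norm_pow]
  exact mul_le_of_le_one_right (norm_nonneg _) (pow_le_one₀ (norm_nonneg _) hz)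

lemma PS_summable {c : ℕ → ℂ} (hc : Summable fun n => ‖c n‖) {z : ℂ} (hz : ‖z‖ ≤ 1) :
    Summable fun n => c n * z ^ n :=
  Summable.of_norm_bounded hc (PS_bound hz)

lemma PS_cont {c : ℕ → ℂ} (hc : Summable fun n => ‖c n‖) {ε : ℝ → ℂ} (hε : Continuous ε)
    (h1 : ∀ θ, ‖ε θ‖ ≤ 1) : Continuous fun θ => PS c (ε θ) := by
  unfold PS
  exact continuous_tsum (fun n => by fun_prop) hc (fun n θ => PS_bound (h1 θ) n)

lemma av_series {c : ℕ → ℂ} (hc : Summable fun n => ‖c n‖) {ε : ℝ → ℂ} (hε : Continuous ε)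
    (h1 : ∀ θ, ‖ε θ‖ ≤ 1) {φ : ℝ → ℂ} (hφ : Continuous φ) :
    HasSum (fun n => c n * av (fun θ => ε θ ^ n * φ θ)) (av fun θ => PS c (ε θ) * φ θ) := by
  unfold av
  have key : HasSum (fun n => ∫ θ in (0 : ℝ)..(2 * Real.pi), c n * ε θ ^ n * φ θ)
      (∫ θ in (0 : ℝ)..(2 * Real.pi), PS c (ε θ) * φ θ) := by
    refine intervalIntegral.hasSum_integral_of_dominated_convergence
      (fun n θ => ‖c n‖ * ‖φ θ‖) ?_ ?_ ?_ ?_ ?_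
    · intro n
      exact (Continuous.aestronglyMeasurable (by fun_prop))
    · intro n
      refine Filter.Eventually.of_forall fun θ _ => ?_
      rw [norm_mul]
      exact mul_le_mul_of_nonneg_right (PS_bound (h1 θ) n) (norm_nonneg _)
    · exact Filter.Eventually.of_forall fun θ _ => hc.mul_right _
    · simp_rw [tsum_mul_right]
      exact Continuous.intervalIntegrable (by fun_prop) _ _
    · refine Filter.Eventually.of_forall fun θ _ => ?_
      exact (PS_summable hc (h1 θ)).hasSum.mul_right _
  have := key.mul_left (2 * Real.pi : ℂ)⁻¹
  refine this.congr_fun fun n => ?_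
  simp_rw [mul_assoc (c n)]
  rw [intervalIntegral.integral_const_mul]
  ring

lemma av_orth (k : ℤ) : av (fun θ => exp (k * I * θ)) = if k = 0 then 1 else 0 := by
  unfold av
  split_ifs with h
  · subst h
    have hpi : (Real.pi : ℂ) ≠ 0 := by exact_mod_cast Real.pi_ne_zero
    simp
    field_simp
  · have hk : (k : ℂ) * I ≠ 0 := mul_ne_zero (by exact_mod_cast h) I_ne_zero
    rw [integral_exp_mul_complex hk]
    have : (k : ℂ) * I * ((2 * Real.pi : ℝ) : ℂ) = k * (2 * Real.pi * I) := by push_cast; ring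
    rw [this, exp_int_mul_two_pi_mul_I]
    simp

lemma av_eeb (n m : ℕ) : av (fun θ => eb θ ^ m * ee θ ^ n) = if m = n then 1 else 0 := by
  have := av_orth ((n : ℤ) - m)
  have h2 : (fun θ : ℝ => eb θ ^ m * ee θ ^ n) =
      fun θ : ℝ => exp ((((n : ℤ) - m : ℤ) : ℂ) * I * θ) := by
    funext θ
    rw [eb, ee, ← exp_nat_mul, ← exp_nat_mul, ← exp_add]
    congr 1; push_cast; ring
  rw [h2, this]
  congr 1
  simp only [eq_iff_iff]; omega

lemma av_eee (n m : ℕ) : av (fun θ => ee θ ^ m * ee θ ^ n) = if m + n = 0 then 1 else 0 := by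
  have := av_orth ((n : ℤ) + m)
  have h2 : (fun θ : ℝ => ee θ ^ m * ee θ ^ n) =
      fun θ : ℝ => exp ((((n : ℤ) + m : ℤ) : ℂ) * I * θ) := by
    funext θ
    rw [ee, ← exp_nat_mul, ← exp_nat_mul, ← exp_add]
    congr 1; push_cast; ring
  rw [h2, this]
  congr 1
  simp only [eq_iff_iff]; omega

lemma moment1 {q : ℕ → ℂ} (hq : Summable fun n => ‖q n‖) (n : ℕ) :
    av (fun θ => ee θ ^ n * PS q (eb θ)) = q n := by
  have h := av_series hq eb_cont (fun θ => (eb_norm θ).le) (φ := fun θ => ee θ ^ n)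
    (ee_cont.pow n)
  simp_rw [av_eeb] at h
  have h2 := h.unique (hasSum_ite_eq n (q n) |>.congr_fun (fun m => by
    by_cases hm : m = n <;> simp [hm]))
  rw [← h2]
  congr 1; funext θ; ring

lemma moment2 {q : ℕ → ℂ} (hq : Summable fun n => ‖q n‖) (n : ℕ) :
    av (fun θ => ee θ ^ n * PS q (ee θ)) = if n = 0 then q 0 else 0 := by
  have h := av_series hq ee_cont (fun θ => (ee_norm θ).le) (φ := fun θ => ee θ ^ n)
    (ee_cont.pow n)
  simp_rw [av_eee] at h
  have h2 := h.unique (hasSum_ite_eq 0 (if n = 0 then q 0 else 0) |>.congr_fun (fun m => by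
    by_cases hm : m = 0 <;> by_cases hn : n = 0 <;> simp [hm, hn]))
  rw [← h2]
  congr 1; funext θ; ring

lemma PS_conj {q : ℕ → ℂ} (θ : ℝ) :
    (starRingEnd ℂ) (PS q (eb θ)) = PS (fun n => (starRingEnd ℂ) (q n)) (ee θ) := by
  unfold PS
  rw [conj_tsum]
  simp [conj_eb]

lemma av_add {φ ψ : ℝ → ℂ} (hφ : Continuous φ) (hψ : Continuous ψ) :
    av (fun θ => φ θ + ψ θ) = av φ + av ψ := by
  unfold av
  rw [intervalIntegral.integral_add (hφ.intervalIntegrable _ _) (hψ.intervalIntegrable _ _)]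
  ring

lemma av_const_mul (c : ℂ) (φ : ℝ → ℂ) : av (fun θ => c * φ θ) = c * av φ := by
  unfold av
  rw [intervalIntegral.integral_const_mul]; ring

/-- average of `p` against the real part kernel -/
lemma avRe {p Q : ℕ → ℂ} (hp : Summable fun n => ‖p n‖) (hQ : Summable fun n => ‖Q n‖)
    (hQ0 : Q 0 ≠ 0) :
    av (fun θ => PS p (ee θ) * (((2 * (PS Q (eb θ) / Q 0) - 1).re : ℝ) : ℂ)) =
      (∑' n, p n * Q n) / Q 0 := by
  have hpc := PS_cont hp ee_cont (fun θ => (ee_norm θ).le)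
  have hQc := PS_cont hQ eb_cont (fun θ => (eb_norm θ).le)
  have hQ' : Summable fun n => ‖(starRingEnd ℂ) (Q n)‖ := by simpa using hQ
  have hQc' := PS_cont hQ' ee_cont (fun θ => (ee_norm θ).le)
  have h1 : av (fun θ => PS p (ee θ) * PS Q (eb θ)) = ∑' n, p n * Q n := by
    have h := av_series hp ee_cont (fun θ => (ee_norm θ).le) hQc
    simp_rw [moment1 hQ] at h
    exact h.tsum_eq.symm
  have h2 : av (fun θ => PS p (ee θ) * PS (fun n => (starRingEnd ℂ) (Q n)) (ee θ)) =
      p 0 * (starRingEnd ℂ) (Q 0) := by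
    have h := av_series hp ee_cont (fun θ => (ee_norm θ).le) hQc'
    simp_rw [moment2 hQ'] at h
    exact h.unique (hasSum_ite_eq 0 (p 0 * (starRingEnd ℂ) (Q 0)) |>.congr_fun (fun m => by
      by_cases hm : m = 0 <;> simp [hm]))
  have h3 : av (fun θ => PS p (ee θ)) = p 0 := by
    have := moment2 hp 0
    simpa using this
  have hc0 : (starRingEnd ℂ) (Q 0) ≠ 0 := by simpa using hQ0
  have hfun : (fun θ => PS p (ee θ) * (((2 * (PS Q (eb θ) / Q 0) - 1).re : ℝ) : ℂ)) =
      fun θ => (Q 0)⁻¹ * (PS p (ee θ) * PS Q (eb θ)) +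
        (((starRingEnd ℂ) (Q 0))⁻¹ * (PS p (ee θ) * PS (fun n => (starRingEnd ℂ) (Q n)) (ee θ)) +
          (-1) * PS p (ee θ)) := by
    funext θ
    have e2 : (starRingEnd ℂ) 2 = 2 := Complex.conj_ofNat 2
    rw [← PS_conj, re_eq_add_conj]
    simp [e2]
    ring
  rw [hfun, av_add (by fun_prop) (by fun_prop), av_add (by fun_prop) (by fun_prop),
    av_const_mul, av_const_mul, av_const_mul, h1, h2, h3]
  field_simp
  ring

def Geo (c : ℕ → ℂ) : Prop := ∃ C t : ℝ, 0 ≤ t ∧ t < 1 ∧ ∀ n, ‖c n‖ ≤ C * t ^ n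

def Bdd (c : ℕ → ℂ) : Prop := ∃ K : ℝ, ∀ n, ‖c n‖ ≤ K

lemma Geo.nonneg {c : ℕ → ℂ} {C t : ℝ} (h : ∀ n, ‖c n‖ ≤ C * t ^ n) : 0 ≤ C := by
  have := h 0
  simp at this
  exact (norm_nonneg _).trans this

lemma Geo.summable {c : ℕ → ℂ} (h : Geo c) : Summable fun n => ‖c n‖ := by
  obtain ⟨C, t, h0, h1, hc⟩ := h
  exact Summable.of_nonneg_of_le (fun n => norm_nonneg _) hc
    ((summable_geometric_of_lt_one h0 h1).mul_left C)

lemma Bdd.of_summable {c : ℕ → ℂ} (h : Summable fun n => ‖c n‖) : Bdd c :=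
  ⟨∑' n, ‖c n‖, fun n => h.le_tsum n (fun _ _ => norm_nonneg _)⟩

lemma Bdd.nonneg {c : ℕ → ℂ} {K : ℝ} (h : ∀ n, ‖c n‖ ≤ K) : 0 ≤ K := (norm_nonneg _).trans (h 0)

lemma swap_summable {X Z Y : ℕ → ℂ} (hX : Bdd X) (hZ : Bdd Z) (hY : Geo Y) :
    Summable fun p : ℕ × ℕ => X p.1 * (Z p.2 * Y (p.1 + p.2)) := by
  obtain ⟨K, hK⟩ := hX
  obtain ⟨K', hK'⟩ := hZ
  obtain ⟨C, t, h0, h1, hC⟩ := hY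
  have hg := summable_geometric_of_lt_one h0 h1
  have hgg : Summable fun p : ℕ × ℕ => t ^ p.1 * t ^ p.2 :=
    hg.mul_of_nonneg hg (fun n => by positivity) (fun n => by positivity)
  refine Summable.of_norm_bounded (hgg.mul_left (K * K' * C)) fun p => ?_
  rw [norm_mul, norm_mul]
  have k0 := Bdd.nonneg hK
  have k1 := Bdd.nonneg hK'
  calc ‖X p.1‖ * (‖Z p.2‖ * ‖Y (p.1 + p.2)‖) ≤ K * (K' * (C * t ^ (p.1 + p.2))) := by
        gcongr
        · exact hK _
        · exact hK' _
        · exact hC _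
    _ = _ := by rw [pow_add]; ring

lemma swap_eq {X Z Y : ℕ → ℂ} (hX : Bdd X) (hZ : Bdd Z) (hY : Geo Y) :
    ∑' j, X j * ∑' m, Z m * Y (j + m) =
      ∑' n, Y n * ∑ p ∈ Finset.HasAntidiagonal.antidiagonal n, X p.1 * Z p.2 := by
  have hs := swap_summable hX hZ hY
  have e1 := hs.tsum_prod
  have e2 := Finset.HasAntidiagonal.sigmaAntidiagonalEquivProd.tsum_eq
    (fun p : ℕ × ℕ => X p.1 * (Z p.2 * Y (p.1 + p.2)))
  have hs2 := (Finset.HasAntidiagonal.sigmaAntidiagonalEquivProd (A := ℕ)).summable_iff.2 hs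
  have e3 := hs2.tsum_sigma' (fun n => (hasSum_fintype _).summable)
  simp_rw [← tsum_mul_left]
  rw [← e1, ← e2]
  refine e3.trans ?_
  congr 1; funext n
  rw [tsum_fintype, Finset.mul_sum]
  refine (Finset.sum_coe_sort (Finset.HasAntidiagonal.antidiagonal n)
    (fun p => X p.1 * (Z p.2 * Y (p.1 + p.2)))).trans ?_
  refine Finset.sum_congr rfl fun p hp => ?_
  rw [Finset.HasAntidiagonal.mem_antidiagonal.1 hp]; ring

lemma tail_summable {Z Y : ℕ → ℂ} (hZ : Bdd Z) (hY : Geo Y) :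
    Summable fun j => ‖∑' m, Z m * Y (j + m)‖ := by
  have h : Summable fun p : ℕ × ℕ => ‖Z p.2 * Y (p.1 + p.2)‖ := by
    have := swap_summable (X := fun _ => 1) ⟨1, by simp⟩ hZ hY
    simpa using this.norm
  refine Summable.of_nonneg_of_le (fun _ => norm_nonneg _) (fun j => ?_) h.prod
  exact norm_tsum_le_tsum_norm (h.prod_factor j)

lemma Geo.shift {Y : ℕ → ℂ} (hY : Geo Y) : Geo fun n => Y (n + 1) := by
  obtain ⟨C, t, h0, h1, hC⟩ := hY
  exact ⟨C * t, t, h0, h1, fun n => (hC _).trans (by rw [pow_succ]; nlinarith [pow_nonneg h0 n])⟩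

def TP (c : ℕ → ℂ) : Prop := ∀ z ζ : ℂ, ‖z‖ = 1 → ‖ζ‖ = 1 → z ≠ ζ →
  PS c ζ ≠ 0 ∧ 0 < ((ζ / z - 1) * (PS c z / PS c ζ)).re

lemma PS_succ {c : ℕ → ℂ} (hc : Summable fun n => ‖c n‖) (h0 : c 0 = 0) {z : ℂ} (hz : ‖z‖ ≤ 1) :
    PS c z = ∑' n, c (n + 1) * z ^ (n + 1) := by
  unfold PS
  rw [(PS_summable hc hz).tsum_eq_zero_add]
  simp [h0]

lemma inv_eq_conj' {w : ℂ} (hw : ‖w‖ = 1) : w⁻¹ = (starRingEnd ℂ) w := Complex.inv_eq_conj hw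

lemma kap_pos {w r : ℂ} (hw : ‖w‖ = 1) (hw1 : w ≠ 1) (hr : 0 < ((1 / w - 1) * r).re) :
    0 < (2 * ((1 - r) / (1 - w)) - 1).re := by
  have h1 : (1 : ℂ) - w ≠ 0 := sub_ne_zero.2 (Ne.symm hw1)
  have hD : (1 - w) * (1 - w⁻¹) = ((normSq (1 - w) : ℝ) : ℂ) := by
    rw [inv_eq_conj' hw, ← mul_conj]; simp
  have hDpos : 0 < normSq (1 - w) := normSq_pos.2 h1
  set D := normSq (1 - w) with hDdef
  have hDc : (D : ℂ) ≠ 0 := by exact_mod_cast hDpos.ne'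
  have hw0 : w ≠ 0 := by rintro rfl; simp at hw
  have e : 2 * ((1 - r) / (1 - w)) - 1 =
      ((w - w⁻¹) + 2 * ((1 / w - 1) * r)) / D := by
    rw [eq_div_iff hDc, ← hD]
    field_simp
    ring
  rw [e, div_ofReal_re]
  apply div_pos _ hDpos
  rw [inv_eq_conj' hw]
  simp only [add_re, sub_re, conj_re, sub_self, zero_add]
  have : (2 * ((1 / w - 1) * r)).re = 2 * ((1 / w - 1) * r).re := by simp
  rw [this]; linarith

lemma eb_ne_one {θ : ℝ} (h : θ ∈ Set.Ioo 0 (2 * Real.pi)) : eb θ ≠ 1 := by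
  intro he
  rw [eb, exp_eq_one_iff] at he
  obtain ⟨n, hn⟩ := he
  have h2 : -θ = n * (2 * Real.pi) := by
    have := congrArg im hn
    simpa using this
  have hpi := Real.pi_pos
  have h3 : (n : ℝ) < 0 := by nlinarith [h.1]
  have h4 : (-1 : ℝ) < n := by nlinarith [h.2]
  have h5 : n < 0 := by exact_mod_cast h3
  have h6 : -1 < n := by exact_mod_cast h4
  omega

lemma sumP (A : ℕ → ℂ) (h0 : A 0 = 0) (η : ℂ) (n : ℕ) :
    ∑ j ∈ Finset.range (n + 1), (A (j + 1) - η * A j) =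
      (1 - η) * ∑ j ∈ Finset.range (n + 2), A j + η * A (n + 1) := by
  induction n with
  | zero => simp [Finset.sum_range_succ, h0]; ring
  | succ n ih => rw [Finset.sum_range_succ, ih, Finset.sum_range_succ _ (n + 2)]; ring


lemma key_PSP {A : ℕ → ℂ} (hA : Summable fun n => ‖A n‖) (hA0 : A 0 = 0) {η : ℂ} :
    ∀ z : ℂ, ‖z‖ = 1 → PS (fun n => A (n + 1) - η * A n) z = (1 / z - η) * PS A z := by
  have hA1 : Summable fun n => ‖A (n + 1)‖ := (summable_nat_add_iff (f := fun n => ‖A n‖) 1).2 hA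
  intro z hz
  have hz0 : z ≠ 0 := by rintro rfl; simp at hz
  have e1 : PS (fun n => A (n + 1) - η * A n) z = (∑' n, A (n + 1) * z ^ n) - η * PS A z := by
    unfold PS
    rw [← tsum_mul_left, ← (PS_summable hA1 hz.le).tsum_sub ((PS_summable hA hz.le).mul_left η)]
    refine tsum_congr fun n => ?_
    ring
  rw [e1, sub_mul]
  congr 1
  rw [PS_succ hA hA0 hz.le, ← tsum_mul_left]
  refine tsum_congr fun n => ?_
  rw [pow_succ]; field_simp


lemma key_T0 {B : ℕ → ℂ} (hB : Geo B) (hB0 : B 0 = 0) :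
    ∑' m, (fun _ => (1 : ℂ)) m * (fun n => B (n + 1)) (0 + m) = PS B 1 := by
  rw [PS_succ hB.summable hB0 (by simp)]
  simp

lemma key_PST {B : ℕ → ℂ} (hB : Geo B) (hB0 : B 0 = 0) :
    ∀ w : ℂ, ‖w‖ = 1 →
      (1 - w) * PS (fun j => ∑' m, (fun _ => (1 : ℂ)) m * (fun n => B (n + 1)) (j + m)) w = PS B 1 - PS B w := by
  have hBs := hB.summable
  have hone : Bdd fun _ => (1 : ℂ) := ⟨1, by simp⟩
  intro w hw
  have hX : Bdd fun j => w ^ j := ⟨1, fun n => by simp [hw]⟩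
  have e := swap_eq hX hone hB.shift
  have e2 : PS (fun j => ∑' m, (fun _ => (1 : ℂ)) m * (fun n => B (n + 1)) (j + m)) w = ∑' n, B (n + 1) * ∑ p ∈ Finset.HasAntidiagonal.antidiagonal n, w ^ p.1 * 1 := by
    rw [← e]
    unfold PS
    refine tsum_congr fun n => ?_
    rw [mul_comm]
  have hB1 : Summable fun n => ‖B (n + 1)‖ := hB.shift.summable
  rw [e2, PS_succ hBs hB0 hw.le, PS_succ hBs hB0 (by simp), ← tsum_mul_left,
    ← Summable.tsum_sub]
  · refine tsum_congr fun n => ?_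
    rw [Finset.Nat.sum_antidiagonal_eq_sum_range_succ_mk]
    simp only [mul_one, one_pow]
    have := geom_sum_mul_neg w (n + 1)
    rw [← mul_one_sub, ← this]
    ring
  · exact (summable_nat_add_iff (f := fun n => B n * (1 : ℂ) ^ n) 1).2 (PS_summable hBs (z := 1) (by simp))
  · exact (summable_nat_add_iff (f := fun n => B n * w ^ n) 1).2 (PS_summable hBs hw.le)


lemma key_Lam {A B : ℕ → ℂ} (hA : Summable fun n => ‖A n‖) (hB : Geo B) (hA0 : A 0 = 0)
    (hB0 : B 0 = 0) {η : ℂ} (hη : ‖η‖ = 1) (hPs : Summable fun n => ‖A (n + 1) - η * A n‖) :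
    ∑' j, (A (j + 1) - η * A j) * ∑' m, (fun _ => (1 : ℂ)) m * (fun n => B (n + 1)) (j + m) =
      ∑' n, B n * ((1 - η) * ∑ j ∈ Finset.range (n + 1), A j + η * A n) := by
  have hBs := hB.summable
  have hone : Bdd fun _ => (1 : ℂ) := ⟨1, by simp⟩
  have e := swap_eq (Bdd.of_summable hPs) hone hB.shift
  refine e.trans ?_
  have hterm : ∀ n, B (n + 1) * ∑ p ∈ Finset.HasAntidiagonal.antidiagonal n, (A (p.1 + 1) - η * A p.1) * 1 =
      B (n + 1) * ((1 - η) * ∑ j ∈ Finset.range (n + 1 + 1), A j + η * A (n + 1)) := by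
    intro n
    congr 1
    rw [← sumP A hA0, Finset.Nat.sum_antidiagonal_eq_sum_range_succ_mk]
    simp
  have hsum : Summable fun n =>
      B n * ((1 - η) * ∑ j ∈ Finset.range (n + 1), A j + η * A n) := by
    refine Summable.of_norm_bounded (hBs.mul_right (2 * (∑' n, ‖A n‖) + ∑' n, ‖A n‖)) fun n => ?_
    rw [norm_mul]
    gcongr
    refine (norm_add_le _ _).trans ?_
    rw [norm_mul, norm_mul, hη, one_mul]
    gcongr
    · refine (norm_sub_le _ _).trans ?_
      rw [hη]; norm_num
    · exact (norm_sum_le _ _).trans (hA.sum_le_tsum _ (fun _ _ => norm_nonneg _))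
    · exact hA.le_tsum n (fun _ _ => norm_nonneg _)
  rw [hsum.tsum_eq_zero_add, hB0, zero_mul, zero_add]
  exact tsum_congr hterm


lemma key_pos {P T : ℕ → ℂ} (hPs : Summable fun n => ‖P n‖) (hTs : Summable fun n => ‖T n‖)
    (hT0ne : T 0 ≠ 0)
    (hkap : ∀ θ ∈ Set.Ioo 0 (2 * Real.pi), 0 < (2 * (PS T (eb θ) / T 0) - 1).re)
    {c0 ζ : ℂ} (hPpos : ∀ z : ℂ, ‖z‖ = 1 → z ≠ ζ → 0 < (c0 * PS P z).re)
    (hPζ : PS P ζ = 0) : ∑' j, P j * T j ≠ 0 := by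
  intro hzero
  have hav := avRe hPs hTs hT0ne
  rw [hzero, zero_div] at hav
  have hpc := PS_cont hPs ee_cont (fun θ => (ee_norm θ).le)
  have hTc := PS_cont hTs eb_cont (fun θ => (eb_norm θ).le)
  set φ : ℝ → ℂ := fun θ => PS P (ee θ) * (((2 * (PS T (eb θ) / T 0) - 1).re : ℝ) : ℂ) with hφ
  have hφc : Continuous φ := by
    rw [hφ]
    refine hpc.mul (continuous_ofReal.comp (continuous_re.comp ?_))
    fun_prop
  have hitg : ∫ θ in (0 : ℝ)..(2 * Real.pi), φ θ = 0 := by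
    unfold av at hav
    rcases mul_eq_zero.1 hav with h | h
    · exfalso
      have : (Real.pi : ℂ) ≠ 0 := by exact_mod_cast Real.pi_ne_zero
      simp [this] at h
    · exact h
  have hitg2 : ∫ θ in (0 : ℝ)..(2 * Real.pi), (c0 * φ θ).re = 0 := by
    have h1 : ∫ θ in (0 : ℝ)..(2 * Real.pi), c0 * φ θ = 0 := by
      rw [intervalIntegral.integral_const_mul, hitg, mul_zero]
    have h2 := Complex.reCLM.intervalIntegral_comp_comm
      (Continuous.intervalIntegrable (u := fun θ => c0 * φ θ) (by fun_prop) 0 (2 * Real.pi))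
      (μ := MeasureTheory.volume)
    simp only [Complex.reCLM_apply] at h2
    rw [h2, h1]; simp
  have hre : ∀ θ, (c0 * φ θ).re = (c0 * PS P (ee θ)).re * (2 * (PS T (eb θ) / T 0) - 1).re := by
    intro θ
    rw [hφ]
    simp only
    rw [← mul_assoc, re_mul_ofReal]
  have hpos : ∀ θ ∈ Set.Ioo 0 (2 * Real.pi), ee θ ≠ ζ → 0 < (c0 * φ θ).re := by
    intro θ hθ hne
    rw [hre]
    exact mul_pos (hPpos _ (ee_norm θ) hne) (hkap θ hθ)
  have hrc : Continuous fun θ => (c0 * φ θ).re := continuous_re.comp (continuous_const.mul hφc)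
  have hnn0 : ∀ θ ∈ Set.Ioo 0 (2 * Real.pi), 0 ≤ (c0 * φ θ).re := by
    intro θ hθ
    by_cases h : ee θ = ζ
    · rw [hre, h, hPζ]; simp
    · exact (hpos θ hθ h).le
  have hpi := Real.pi_pos
  have hnn : ∀ θ ∈ Set.Icc 0 (2 * Real.pi), 0 ≤ (c0 * φ θ).re := by
    have hcl : IsClosed {θ | 0 ≤ (c0 * φ θ).re} := isClosed_le continuous_const hrc
    have := closure_minimal (s := Set.Ioo 0 (2 * Real.pi)) hnn0 hcl
    rw [closure_Ioo (by positivity)] at this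
    exact this
  have hex : ∃ θ ∈ Set.Ioo 0 (2 * Real.pi), ee θ ≠ ζ := by
    by_cases h : ee Real.pi = ζ
    · refine ⟨Real.pi / 2, ⟨by positivity, by linarith⟩, ?_⟩
      rw [← h, ee, ee]
      have : ((Real.pi / 2 : ℝ) : ℂ) * I = Real.pi / 2 * I := by push_cast; ring
      rw [this, exp_pi_div_two_mul_I, exp_pi_mul_I]
      intro h
      have := congrArg im h
      simp at this
    · exact ⟨Real.pi, ⟨hpi, by linarith⟩, h⟩
  obtain ⟨θ0, hθ0, hne0⟩ := hex
  have := intervalIntegral.integral_pos (by positivity : (0 : ℝ) < 2 * Real.pi) hrc.continuousOn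
    (fun θ hθ => hnn θ ⟨hθ.1.le, hθ.2⟩) ⟨θ0, ⟨hθ0.1.le, hθ0.2.le⟩, hpos θ0 hθ0 hne0⟩
  rw [hitg2] at this
  exact lt_irrefl _ this


lemma key' {A B P T : ℕ → ℂ} (tA : TP A) (tB : TP B) {η : ℂ} (hη : ‖η‖ = 1)
    (hPs : Summable fun n => ‖P n‖) (hTs : Summable fun n => ‖T n‖)
    (hPSP : ∀ z : ℂ, ‖z‖ = 1 → PS P z = (1 / z - η) * PS A z)
    (hT0 : T 0 = PS B 1)
    (hPST : ∀ w : ℂ, ‖w‖ = 1 → (1 - w) * PS T w = PS B 1 - PS B w) :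
    ∑' j, P j * T j ≠ 0 := by
  have hB1ne : PS B 1 ≠ 0 := (tB (-1) 1 (by simp) (by simp) (by norm_num)).1
  have hT0ne : T 0 ≠ 0 := by rw [hT0]; exact hB1ne
  have hkap : ∀ θ ∈ Set.Ioo 0 (2 * Real.pi), 0 < (2 * (PS T (eb θ) / T 0) - 1).re := by
    intro θ hθ
    have hw1 := eb_ne_one hθ
    have hw := eb_norm θ
    have h1 : (1 : ℂ) - eb θ ≠ 0 := sub_ne_zero.2 (Ne.symm hw1)
    have := kap_pos hw hw1 (tB _ 1 hw (by simp) hw1).2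
    convert this using 4
    rw [hT0, eq_div_iff h1, div_mul_eq_mul_div, mul_comm (PS T _), hPST _ hw]
    field_simp
  have hη0 : η ≠ 0 := by rintro h; rw [h] at hη; simp at hη
  obtain ⟨ζ, hζ⟩ : ∃ ζ, ζ = (starRingEnd ℂ) η := ⟨_, rfl⟩
  have hζn : ‖ζ‖ = 1 := by rw [hζ]; simpa using hη
  have hζη : ζ * η = 1 := by
    rw [hζ, ← inv_eq_conj' hη]
    exact inv_mul_cancel₀ hη0
  have hζ0 : ζ ≠ 0 := by rintro h; rw [h] at hζn; simp at hζn
  obtain ⟨c0, hc0⟩ : ∃ c0, c0 = ζ / PS A ζ := ⟨_, rfl⟩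
  have hPpos : ∀ z : ℂ, ‖z‖ = 1 → z ≠ ζ → 0 < (c0 * PS P z).re := by
    intro z hz hne
    have := (tA z ζ hz hζn hne).2
    convert this using 2
    rw [hPSP z hz, hc0]
    have : ζ / PS A ζ * ((1 / z - η) * PS A z) = (ζ / z - ζ * η) * (PS A z / PS A ζ) := by ring
    rw [this, hζη]
  have hPζ : PS P ζ = 0 := by
    rw [hPSP ζ hζn]
    have : 1 / ζ - η = 0 := by rw [← hζη]; field_simp; ring
    rw [this, zero_mul]
  exact key_pos hPs hTs hT0ne hkap hPpos hPζ

lemma key {A B : ℕ → ℂ} (hA : Summable fun n => ‖A n‖) (hB : Geo B) (hA0 : A 0 = 0)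
    (hB0 : B 0 = 0) (tA : TP A) (tB : TP B) {η : ℂ} (hη : ‖η‖ = 1) :
    ∑' n, B n * ((1 - η) * ∑ j ∈ Finset.range (n + 1), A j + η * A n) ≠ 0 := by
  have hA1 : Summable fun n => ‖A (n + 1)‖ := (summable_nat_add_iff (f := fun n => ‖A n‖) 1).2 hA
  have hPs : Summable fun n => ‖A (n + 1) - η * A n‖ := by
    refine Summable.of_nonneg_of_le (fun _ => norm_nonneg _) (fun n => ?_) (hA1.add hA)
    refine (norm_sub_le _ _).trans ?_
    rw [norm_mul, hη, one_mul]
  have hone : Bdd fun _ => (1 : ℂ) := ⟨1, by simp⟩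
  have e := key_Lam hA hB hA0 hB0 hη hPs
  have h := key' tA tB hη hPs (tail_summable hone hB.shift) (key_PSP hA hA0) (key_T0 hB hB0)
    (key_PST hB hB0)
  intro h0
  rw [h0] at e
  exact h e

lemma homot {N M : ℝ → ℂ} (hN : Continuous N) (hM : Continuous M) (h0 : N 0 = M 0) (h00 : N 0 ≠ 0)
    (h : ∀ t : ℝ, 0 < t → t ≤ 1 → ∀ η : ℂ, ‖η‖ = 1 → η * N t + (1 - η) * M t ≠ 0) :
    N 1 ≠ 0 ∧ 0 ≤ (2 * (M 1 / N 1) - 1).re := by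
  have hne : ∀ t ∈ Set.Icc (0 : ℝ) 1, N t ≠ 0 := by
    intro t ht
    rcases eq_or_lt_of_le ht.1 with h1 | h1
    · rw [← h1]; exact h00
    · have := h t h1 ht.2 1 (by simp)
      simpa using this
  refine ⟨hne 1 (by simp), ?_⟩
  by_contra hlt
  push Not at hlt
  have hc : ContinuousOn (fun t => (2 * (M t / N t) - 1).re) (Set.Icc 0 1) := by
    refine continuous_re.comp_continuousOn ?_
    exact (continuousOn_const.mul (hM.continuousOn.div hN.continuousOn hne)).sub continuousOn_const
  have hiv := intermediate_value_Icc' (zero_le_one' ℝ) hc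
  have h1 : (2 * (M 0 / N 0) - 1).re = 1 := by
    rw [← h0, div_self h00]; norm_num
  obtain ⟨t, ht, hqt⟩ := hiv (show (0 : ℝ) ∈ _ from ⟨hlt.le, by simp only [h1]; norm_num⟩)
  simp only at hqt
  have ht0 : 0 < t := by
    rcases eq_or_lt_of_le ht.1 with h2 | h2
    · rw [← h2, h1] at hqt; norm_num at hqt
    · exact h2
  obtain ⟨q, hq⟩ : ∃ q, q = 2 * (M t / N t) - 1 := ⟨_, rfl⟩
  rw [← hq] at hqt
  have hNt := hne t ht
  have hM' : M t = (q + 1) * N t / 2 := by rw [hq]; field_simp; ring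
  have hq1 : q - 1 ≠ 0 := by
    intro hh
    have := congrArg re hh
    simp [hqt] at this
  have hn : ‖q + 1‖ = ‖q - 1‖ := by
    rw [← sq_eq_sq₀ (norm_nonneg _) (norm_nonneg _), ← normSq_eq_norm_sq, ← normSq_eq_norm_sq,
      normSq_apply, normSq_apply]
    simp [hqt]
  refine h t ht0 ht.2 ((q + 1) / (q - 1)) ?_ ?_
  · rw [norm_div, hn, div_self (norm_ne_zero_iff.2 hq1)]
  · rw [hM']; field_simp; ring

/-- convolution coefficients -/
noncomputable def cc (σ : ℂ) (A : ℕ → ℂ) (n : ℕ) : ℂ :=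
  ∑ p ∈ Finset.HasAntidiagonal.antidiagonal n, σ ^ p.1 * A p.2

lemma TP_rot {A : ℕ → ℂ} (tA : TP A) {τ : ℂ} (hτ : ‖τ‖ = 1) : TP fun n => A n * τ ^ n := by
  have e : ∀ z, PS (fun n => A n * τ ^ n) z = PS A (τ * z) := by
    intro z
    unfold PS
    refine tsum_congr fun n => ?_
    rw [mul_pow]; ring
  have h0 : τ ≠ 0 := by rintro rfl; simp at hτ
  intro z ζ hz hζ hne
  have := tA (τ * z) (τ * ζ) (by simp [hτ, hz]) (by simp [hτ, hζ])
    (fun h => hne (mul_left_cancel₀ h0 h))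
  rw [e, e]
  rwa [mul_div_mul_left _ _ h0] at this

lemma cc_eq {σ : ℂ} (hσ : σ ≠ 0) (A : ℕ → ℂ) (n : ℕ) :
    cc σ A n = σ ^ n * ∑ j ∈ Finset.range (n + 1), A j * σ⁻¹ ^ j := by
  unfold cc
  rw [← Finset.Nat.sum_antidiagonal_swap, Finset.Nat.sum_antidiagonal_eq_sum_range_succ_mk,
    Finset.mul_sum]
  refine Finset.sum_congr rfl fun k hk => ?_
  have hk' : k ≤ n := by simpa [Nat.lt_succ_iff] using hk
  simp only [Prod.fst_swap, Prod.snd_swap]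
  rw [pow_sub₀ _ hσ hk', inv_pow]; ring

lemma cc_bound {σ : ℂ} (hσ : ‖σ‖ = 1) {A : ℕ → ℂ} (hA : Summable fun n => ‖A n‖) (n : ℕ) :
    ‖cc σ A n‖ ≤ ∑' n, ‖A n‖ := by
  have h0 : σ ≠ 0 := by rintro rfl; simp at hσ
  rw [cc_eq h0, norm_mul, norm_pow, hσ, one_pow, one_mul]
  refine (norm_sum_le _ _).trans ?_
  refine le_trans (Finset.sum_le_sum fun j _ => ?_)
    (hA.sum_le_tsum (Finset.range (n + 1)) (fun _ _ => norm_nonneg _))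
  rw [norm_mul, norm_pow, norm_inv, hσ]; simp

lemma key_sigma {A B : ℕ → ℂ} (hA : Summable fun n => ‖A n‖) (hB : Geo B) (hA0 : A 0 = 0)
    (hB0 : B 0 = 0) (tA : TP A)
    (tB : ∀ v : ℂ, v ≠ 0 → ‖v‖ ≤ 1 → TP fun n => B n * v ^ n)
    {σ η : ℂ} (hσ : ‖σ‖ = 1) (hη : ‖η‖ = 1) {t : ℝ} (ht : 0 < t) (ht1 : t ≤ 1) :
    ∑' n, (B n * ((1 - η) * cc σ A n + η * A n)) * (t : ℂ) ^ n ≠ 0 := by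
  have h0 : σ ≠ 0 := by rintro rfl; simp at hσ
  have htc : (t : ℂ) ≠ 0 := by exact_mod_cast ht.ne'
  have hn : ‖σ * (t : ℂ)‖ ≤ 1 := by
    rw [norm_mul, hσ, one_mul, norm_real, Real.norm_of_nonneg ht.le]; exact ht1
  have hA' : Summable fun n => ‖A n * σ⁻¹ ^ n‖ := by simpa [hσ] using hA
  have hB' : Geo fun n => B n * (σ * t) ^ n := by
    obtain ⟨C, s, hs0, hs1, hC⟩ := hB
    exact ⟨C, s, hs0, hs1, fun n => (PS_bound hn n).trans (hC n)⟩
  have := key hA' hB' (by simp [hA0]) (by simp [hB0]) (TP_rot tA (by simp [hσ]))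
    (tB _ (mul_ne_zero h0 htc) hn) hη
  convert this using 1
  refine tsum_congr fun n => ?_
  rw [cc_eq h0, mul_pow]
  have : σ ^ n * σ⁻¹ ^ n = 1 := by rw [← mul_pow, mul_inv_cancel₀ h0, one_pow]
  linear_combination (- B n * t ^ n * η * A n) * this

noncomputable def QQ (A B : ℕ → ℂ) (j : ℕ) : ℂ := ∑' k, A k * B (j + k)

lemma PS_QQ {A B : ℕ → ℂ} (hA : Summable fun n => ‖A n‖) (hB : Geo B) {σ : ℂ} (hσ : ‖σ‖ = 1) :
    PS (QQ A B) σ = ∑' n, B n * cc σ A n := by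
  have hX : Bdd fun j => σ ^ j := ⟨1, fun n => by simp [hσ]⟩
  have := swap_eq hX (Bdd.of_summable hA) hB
  unfold cc
  rw [← this]
  unfold PS QQ
  exact tsum_congr fun n => mul_comm _ _

lemma posQ {A B : ℕ → ℂ} (hA : Summable fun n => ‖A n‖) (hB : Geo B) (hA0 : A 0 = 0)
    (hB0 : B 0 = 0) (hA1 : A 1 ≠ 0) (hB1 : B 1 ≠ 0) (tA : TP A)
    (tB : ∀ v : ℂ, v ≠ 0 → ‖v‖ ≤ 1 → TP fun n => B n * v ^ n)
    {σ : ℂ} (hσ : ‖σ‖ = 1) :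
    QQ A B 0 ≠ 0 ∧ 0 ≤ (2 * (PS (QQ A B) σ / QQ A B 0) - 1).re := by
  have hBs := hB.summable
  have hAB : Summable fun n => ‖A n * B n‖ := by
    refine Summable.of_nonneg_of_le (fun _ => norm_nonneg _) (fun n => ?_)
      (hBs.mul_left (∑' n, ‖A n‖))
    rw [norm_mul]
    exact mul_le_mul_of_nonneg_right (hA.le_tsum n (fun _ _ => norm_nonneg _)) (norm_nonneg _)
  have hcB : Summable fun n => ‖cc σ A n * B n‖ := by
    refine Summable.of_nonneg_of_le (fun _ => norm_nonneg _) (fun n => ?_)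
      (hBs.mul_left (∑' n, ‖A n‖))
    rw [norm_mul]
    exact mul_le_mul_of_nonneg_right (cc_bound hσ hA n) (norm_nonneg _)
  have hAB' : Summable fun n => ‖A (n + 1) * B (n + 1)‖ :=
    (summable_nat_add_iff (f := fun n => ‖A n * B n‖) 1).2 hAB
  have hcB' : Summable fun n => ‖cc σ A (n + 1) * B (n + 1)‖ :=
    (summable_nat_add_iff (f := fun n => ‖cc σ A n * B n‖) 1).2 hcB
  obtain ⟨ε, hε⟩ : ∃ ε : ℝ → ℂ, ε = fun t => ((max 0 (min t 1) : ℝ) : ℂ) := ⟨_, rfl⟩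
  have hεc : Continuous ε := by rw [hε]; fun_prop
  have hε1 : ∀ t, ‖ε t‖ ≤ 1 := by
    intro t
    rw [hε]
    simp only [norm_real]
    rw [Real.norm_of_nonneg (le_max_left _ _)]
    exact max_le zero_le_one (min_le_right _ _)
  have hεt : ∀ t : ℝ, 0 ≤ t → t ≤ 1 → ε t = t := by
    intro t h0 h1
    rw [hε]; simp [h0, h1]
  have hNc := PS_cont hAB' hεc hε1
  have hMc := PS_cont hcB' hεc hε1
  have hPS0 : ∀ c : ℕ → ℂ, PS c 0 = c 0 := by
    intro c
    unfold PS
    rw [tsum_eq_single 0]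
    · simp
    · intro n hn; simp [hn]
  have hcc0 : cc σ A 0 = 0 := by simp [cc, hA0]
  have hcc1 : cc σ A 1 = A 1 := by
    simp [cc, Finset.Nat.antidiagonal_succ, hA0]
  have hε0 : ε 0 = 0 := by rw [hεt 0 le_rfl zero_le_one]; simp
  have hε11 : ε 1 = 1 := by rw [hεt 1 zero_le_one le_rfl]; simp
  have hfull : ∀ (c : ℕ → ℂ), (Summable fun n => ‖c n‖) → c 0 = 0 → ∀ z : ℂ, ‖z‖ ≤ 1 →
      PS c z = z * PS (fun n => c (n + 1)) z := by
    intro c hc h0 z hz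
    rw [PS_succ hc h0 hz]
    unfold PS
    rw [← tsum_mul_left]
    exact tsum_congr fun n => by rw [pow_succ]; ring
  have H := homot hNc hMc (by rw [hε0, hPS0, hPS0, hcc1])
    (by rw [hε0, hPS0]; exact mul_ne_zero hA1 hB1) (by
      intro t ht ht1 η hη hz
      rw [hεt t ht.le ht1] at hz
      have htn : ‖(t : ℂ)‖ ≤ 1 := by
        rw [norm_real, Real.norm_of_nonneg ht.le]; exact ht1
      refine key_sigma hA hB hA0 hB0 tA tB hσ hη ht ht1 ?_
      have e1 := hfull _ hAB (by simp [hA0]) t htn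
      have e2 := hfull _ hcB (by simp [hB0]) t htn
      have e3 : ∑' n, (B n * ((1 - η) * cc σ A n + η * A n)) * (t : ℂ) ^ n =
          η * PS (fun n => A n * B n) t + (1 - η) * PS (fun n => cc σ A n * B n) t := by
        unfold PS
        rw [← tsum_mul_left, ← tsum_mul_left, ← Summable.tsum_add
          ((PS_summable hAB htn).mul_left η) ((PS_summable hcB htn).mul_left (1 - η))]
        exact tsum_congr fun n => by ring
      rw [e3, e1, e2]
      linear_combination (t : ℂ) * hz)
  rw [hε11] at H
  have n1 := hfull _ hAB (by simp [hA0]) 1 (by simp)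
  have n2 := hfull _ hcB (by simp [hB0]) 1 (by simp)
  rw [one_mul] at n1 n2
  have q0 : QQ A B 0 = PS (fun n => A n * B n) 1 := by
    unfold QQ PS; simp
  have q1 : PS (QQ A B) σ = PS (fun n => cc σ A n * B n) 1 := by
    rw [PS_QQ hA hB hσ]; unfold PS
    exact tsum_congr fun n => by simp; ring
  rw [q0, q1, n1, n2]
  exact H

lemma av_mem {K : Set ℂ} (hKc : Convex ℝ K) (hKcl : IsClosed K) {F : ℝ → ℂ} {κ : ℝ → ℝ}
    (hF : Continuous F) (hκ : Continuous κ) (hFK : ∀ θ, F θ ∈ K) (hκ0 : ∀ θ, 0 ≤ κ θ)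
    (h1 : av (fun θ => (κ θ : ℂ)) = 1) : av (fun θ => F θ * (κ θ : ℂ)) ∈ K := by
  by_contra hn
  obtain ⟨f, u, hfu, hu⟩ := geometric_hahn_banach_closed_point hKc hKcl hn
  have hpi := Real.pi_pos
  have h1' : (2 * Real.pi)⁻¹ * ∫ θ in (0 : ℝ)..(2 * Real.pi), κ θ = 1 := by
    unfold av at h1
    rw [intervalIntegral.integral_ofReal] at h1
    exact_mod_cast h1
  have h2 : f (av (fun θ => F θ * (κ θ : ℂ))) =
      (2 * Real.pi)⁻¹ * ∫ θ in (0 : ℝ)..(2 * Real.pi), κ θ * f (F θ) := by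
    have e := f.intervalIntegral_comp_comm
      (Continuous.intervalIntegrable (u := fun θ => F θ * (κ θ : ℂ)) (by fun_prop) 0 (2 * Real.pi))
      (μ := MeasureTheory.volume)
    have e2 : av (fun θ => F θ * (κ θ : ℂ)) =
        ((2 * Real.pi)⁻¹ : ℝ) • ∫ θ in (0 : ℝ)..(2 * Real.pi), F θ * (κ θ : ℂ) := by
      unfold av; rw [real_smul]; push_cast; rfl
    rw [e2, map_smul, ← e, smul_eq_mul]
    congr 2
    funext θ
    rw [mul_comm, ← real_smul, map_smul, smul_eq_mul]
  have hfF : Continuous fun θ => f (F θ) := f.continuous.comp hF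
  have h3 : ∫ θ in (0 : ℝ)..(2 * Real.pi), κ θ * f (F θ) ≤
      ∫ θ in (0 : ℝ)..(2 * Real.pi), κ θ * u := by
    refine intervalIntegral.integral_mono_on (by positivity)
      ((hκ.mul hfF).intervalIntegrable _ _)
      ((hκ.mul continuous_const).intervalIntegrable _ _) fun θ _ => ?_
    exact mul_le_mul_of_nonneg_left (hfu _ (hFK θ)).le (hκ0 θ)
  rw [intervalIntegral.integral_mul_const] at h3
  have h4 := mul_le_mul_of_nonneg_left h3 (by positivity : 0 ≤ (2 * Real.pi)⁻¹)
  rw [← mul_assoc, h1', one_mul, ← h2] at h4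
  linarith

lemma core {K : Set ℂ} (hKc : Convex ℝ K) (hKcl : IsClosed K) {A B F : ℕ → ℂ}
    (hA : Summable fun n => ‖A n‖) (hnA : Summable fun n : ℕ => ‖(n : ℂ) * A n‖)
    (hF : Summable fun n => ‖F n‖) (hB : Geo B) (hN : QQ A B 0 ≠ 0)
    (hpos : ∀ σ : ℂ, ‖σ‖ = 1 → 0 ≤ (2 * (PS (QQ A B) σ / QQ A B 0) - 1).re)
    (hrel : ∀ z : ℂ, ‖z‖ = 1 → PS (fun n => (n : ℂ) * A n) z = PS F z * PS A z)
    (hFK : ∀ z : ℂ, ‖z‖ = 1 → PS F z ∈ K) :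
    (∑' n : ℕ, (n : ℂ) * A n * B n) / QQ A B 0 ∈ K := by
  have hBs := hB.summable
  have hQs : Summable fun j => ‖QQ A B j‖ := tail_summable (Bdd.of_summable hA) hB
  have cA := PS_cont hA ee_cont (fun θ => (ee_norm θ).le)
  have cF := PS_cont hF ee_cont (fun θ => (ee_norm θ).le)
  have cB := PS_cont hBs eb_cont (fun θ => (eb_norm θ).le)
  have cQ := PS_cont hQs eb_cont (fun θ => (eb_norm θ).le)
  have h1 : av (fun θ => PS (fun n => (n : ℂ) * A n) (ee θ) * PS B (eb θ)) =
      ∑' n : ℕ, (n : ℂ) * A n * B n := by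
    have h := av_series hnA ee_cont (fun θ => (ee_norm θ).le) cB
    simp_rw [moment1 hBs] at h
    exact h.tsum_eq.symm
  have hm : ∀ j, av (fun θ => ee θ ^ j * (PS A (ee θ) * PS B (eb θ))) = QQ A B j := by
    intro j
    have h := av_series hA ee_cont (fun θ => (ee_norm θ).le) (φ := fun θ => ee θ ^ j * PS B (eb θ))
      ((ee_cont.pow j).mul cB)
    have e : ∀ k, av (fun θ => ee θ ^ k * (ee θ ^ j * PS B (eb θ))) = B (j + k) := by
      intro k
      rw [← moment1 hBs (j + k)]
      congr 1; funext θ; rw [pow_add]; ring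
    simp_rw [e] at h
    unfold QQ
    rw [h.tsum_eq]
    congr 1; funext θ; ring
  have h2 : ∑' n : ℕ, (n : ℂ) * A n * B n = ∑' j, F j * QQ A B j := by
    have h := av_series hF ee_cont (fun θ => (ee_norm θ).le)
      (φ := fun θ => PS A (ee θ) * PS B (eb θ)) (cA.mul cB)
    simp_rw [hm] at h
    rw [h.tsum_eq, ← h1]
    congr 1; funext θ
    rw [hrel _ (ee_norm θ)]; ring
  rw [h2, ← avRe hF hQs hN]
  have hκc : Continuous fun θ => (2 * (PS (QQ A B) (eb θ) / QQ A B 0) - 1).re :=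
    continuous_re.comp (by fun_prop)
  refine av_mem hKc hKcl cF hκc (fun θ => hFK _ (ee_norm θ)) (fun θ => hpos _ (eb_norm θ)) ?_
  obtain ⟨p, hp⟩ : ∃ p : ℕ → ℂ, p = fun n => if n = 0 then 1 else 0 := ⟨_, rfl⟩
  have hps : Summable fun n => ‖p n‖ := by
    refine summable_of_ne_finset_zero (s := {0}) fun n hn => ?_
    have : n ≠ 0 := by simpa using hn
    simp [hp, this]
  have h3 := avRe hps hQs hN
  have e1 : ∀ z, PS p z = 1 := by
    intro z
    unfold PS
    rw [tsum_eq_single 0]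
    · simp [hp]
    · intro n hn; simp [hp, hn]
  have e2 : ∑' n, p n * QQ A B n = QQ A B 0 := by
    rw [tsum_eq_single 0]
    · simp [hp]
    · intro n hn; simp [hp, hn]
  simp_rw [e1, one_mul] at h3
  rw [h3, e2, div_self hN]

def Conv (c : ℕ → ℂ) : Prop := ∀ z : ℂ, ‖z‖ < 1 → Summable fun n => c n * z ^ n

lemma conv_of_ne {c : ℕ → ℂ} (h : ∀ z : ℂ, ‖z‖ < 1 → z ≠ 0 → PS c z ≠ 0) : Conv c := by
  intro z hz
  by_cases h0 : z = 0
  · refine summable_of_ne_finset_zero (s := {0}) fun n hn => ?_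
    have : n ≠ 0 := by simpa using hn
    simp [h0, this]
  · by_contra hn
    exact h z hz h0 (tsum_eq_zero_of_not_summable hn)

lemma Conv.geo {c : ℕ → ℂ} (hc : Conv c) {v : ℂ} (hv : ‖v‖ < 1) : Geo fun n => c n * v ^ n := by
  obtain ⟨s, hs1, hs2⟩ := exists_between hv
  have hs0 : 0 < s := (norm_nonneg v).trans_lt hs1
  have hsn : ‖(s : ℂ)‖ = s := by rw [norm_real, Real.norm_of_nonneg hs0.le]
  obtain ⟨K, hK⟩ := Bdd.of_summable (hc s (by rw [hsn]; exact hs2)).norm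
  refine ⟨K, ‖v‖ / s, by positivity, (div_lt_one hs0).2 hs1, fun n => ?_⟩
  have h1 := hK n
  rw [norm_mul, norm_pow, hsn] at h1
  rw [norm_mul, norm_pow, div_pow, ← mul_div_assoc, le_div_iff₀ (by positivity)]
  calc ‖c n‖ * ‖v‖ ^ n * s ^ n = ‖c n‖ * s ^ n * ‖v‖ ^ n := by ring
    _ ≤ K * ‖v‖ ^ n := by gcongr

lemma Geo.nmul {c : ℕ → ℂ} (hc : Geo c) : Summable fun n : ℕ => ‖(n : ℂ) * c n‖ := by
  obtain ⟨C, t, h0, h1, hC⟩ := hc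
  have := summable_pow_mul_geometric_of_norm_lt_one (R := ℝ) 1 (r := t)
    (by rw [Real.norm_of_nonneg h0]; exact h1)
  refine Summable.of_nonneg_of_le (fun _ => norm_nonneg _) (fun n => ?_) (this.mul_left C)
  rw [norm_mul, Complex.norm_natCast]
  calc (n : ℝ) * ‖c n‖ ≤ n * (C * t ^ n) := by gcongr; exact hC n
    _ = _ := by ring

lemma PS_deriv {c : ℕ → ℂ} (hc : Conv c) {z : ℂ} (hz : ‖z‖ < 1) :
    DifferentiableAt ℂ (PS c) z ∧ HasSum (fun n : ℕ => c n * (n * z ^ (n - 1))) (deriv (PS c) z) := by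
  obtain ⟨s, hs1, hs2⟩ := exists_between hz
  have hs0 : 0 < s := (norm_nonneg z).trans_lt hs1
  have hsn : ‖(s : ℂ)‖ = s := by rw [norm_real, Real.norm_of_nonneg hs0.le]
  have hu := (hc s (by rw [hsn]; exact hs2)).norm
  have hle : ∀ (i : ℕ), ∀ w ∈ ball (0 : ℂ) s, ‖c i * w ^ i‖ ≤ ‖c i * (s : ℂ) ^ i‖ := by
    intro i w hw
    have hw' : ‖w‖ < s := by simpa using hw
    rw [norm_mul, norm_mul, norm_pow, norm_pow, hsn]
    gcongr
  have hd : ∀ i : ℕ, DifferentiableOn ℂ (fun w : ℂ => c i * w ^ i) (ball 0 s) :=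
    fun i => by fun_prop
  have hzU : z ∈ ball (0 : ℂ) s := by simpa using hs1
  have h1 := Complex.differentiableOn_tsum_of_summable_norm hu hd isOpen_ball hle
  have h2 := Complex.hasSum_deriv_of_summable_norm hu hd isOpen_ball hle hzU
  refine ⟨h1.differentiableAt (isOpen_ball.mem_nhds hzU), ?_⟩
  refine h2.congr_fun fun n => ?_
  simp

lemma PS_deriv' {c : ℕ → ℂ} (hc : Conv c) {z : ℂ} (hz : ‖z‖ < 1) :
    z * deriv (PS c) z = PS (fun n => (n : ℂ) * c n) z := by
  have h := (PS_deriv hc hz).2.mul_left z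
  rw [← h.tsum_eq]
  unfold PS
  refine tsum_congr fun n => ?_
  rcases n with _ | n
  · simp
  · simp only [Nat.add_sub_cancel]; rw [pow_succ]; ring

lemma PS_deriv0 {c : ℕ → ℂ} (hc : Conv c) : deriv (PS c) 0 = c 1 := by
  have h := (PS_deriv hc (z := 0) (by simp)).2
  rw [← h.tsum_eq, tsum_eq_single 1]
  · simp
  · intro n hn
    rcases n with _ | _ | n
    · simp
    · simp at hn
    · simp

noncomputable def ld (h : ℂ → ℂ) (z : ℂ) : ℂ := deriv h z / dslope h 0 z

lemma dslope0 {h : ℂ → ℂ} (h0 : h 0 = 0) {z : ℂ} (hz : z ≠ 0) : dslope h 0 z = h z / z := by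
  rw [dslope_of_ne _ hz, slope_def_field, h0]; simp

lemma ld_diff {h : ℂ → ℂ} (hd : DifferentiableOn ℂ h (ball 0 1)) (h0 : h 0 = 0)
    (h1 : deriv h 0 = 1) (hne : ∀ z : ℂ, ‖z‖ < 1 → z ≠ 0 → h z ≠ 0) :
    DifferentiableOn ℂ (ld h) (ball 0 1) := by
  have hG : DifferentiableOn ℂ (dslope h 0) (ball 0 1) :=
    (Complex.differentiableOn_dslope (isOpen_ball.mem_nhds (by simp))).2 hd
  refine (hd.deriv isOpen_ball).div hG fun z hz => ?_
  by_cases hz0 : z = 0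
  · rw [hz0, dslope_same, h1]; exact one_ne_zero
  · rw [dslope0 h0 hz0]
    exact div_ne_zero (hne z (by simpa using hz) hz0) hz0

lemma ld_zero {h : ℂ → ℂ} (h1 : deriv h 0 = 1) : ld h 0 = 1 := by
  rw [ld, dslope_same, h1, div_self one_ne_zero]

lemma ld_eq {h : ℂ → ℂ} (h0 : h 0 = 0) {z : ℂ} (hz : z ≠ 0) : ld h z = z * deriv h z / h z := by
  rw [ld, dslope0 h0 hz, div_div_eq_mul_div, mul_comm]

lemma ld_mul {h : ℂ → ℂ} (h0 : h 0 = 0) (hne : ∀ z : ℂ, ‖z‖ < 1 → z ≠ 0 → h z ≠ 0) {z : ℂ}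
    (hz : ‖z‖ < 1) (hz0 : z ≠ 0) : ld h z * h z = z * deriv h z := by
  rw [ld_eq h0 hz0, div_mul_cancel₀ _ (hne z hz hz0)]

lemma TP_gen {h : ℂ → ℂ} {c : ℕ → ℂ} (hd : DifferentiableOn ℂ h (ball 0 1)) (h0 : h 0 = 0)
    (h1 : deriv h 0 = 1) (hne : ∀ z : ℂ, ‖z‖ < 1 → z ≠ 0 → h z ≠ 0)
    (hc : ∀ z : ℂ, ‖z‖ < 1 → h z = PS c z) {v : ℂ} (hv0 : v ≠ 0) (hv : ‖v‖ < 1)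
    (hre : ∀ z : ℂ, ‖z‖ ≤ ‖v‖ → 1 / 2 < (ld h z).re) : TP fun n => c n * v ^ n := by
  have e : ∀ z : ℂ, ‖z‖ = 1 → PS (fun n => c n * v ^ n) z = h (v * z) := by
    intro z hz
    rw [hc _ (by rw [norm_mul, hz, mul_one]; exact hv)]
    unfold PS
    refine tsum_congr fun n => ?_
    rw [mul_pow]; ring
  have hn : ∀ z : ℂ, ‖z‖ = 1 → ‖v * z‖ = ‖v‖ := fun z hz => by rw [norm_mul, hz, mul_one]
  have hz0 : ∀ z : ℂ, ‖z‖ = 1 → z ≠ 0 := fun z hz h => by rw [h] at hz; simp at hz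
  have hnz : ∀ z : ℂ, ‖z‖ = 1 → h (v * z) ≠ 0 := fun z hz =>
    hne _ (by rw [hn z hz]; exact hv) (mul_ne_zero hv0 (hz0 z hz))
  have tw := twoPoint (f := fun z => h (v * z)) (p := fun z => ld h (v * z)) (by
      apply DifferentiableOn.diffContOnCl
      rw [closure_ball _ one_ne_zero]
      refine (ld_diff hd h0 h1 hne).comp (by fun_prop) fun z hz => ?_
      have hz' : ‖z‖ ≤ 1 := by simpa using hz
      have : ‖v * z‖ < 1 := by
        rw [norm_mul]
        exact lt_of_le_of_lt (mul_le_of_le_one_right (norm_nonneg _) hz') hv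
      simpa using this)
    (by simp [ld_zero h1]) (fun z hz => hre _ (hn z hz).le) hnz (by
      intro z hz
      have hb : v * z ∈ ball (0 : ℂ) 1 := by
        have := hn z hz
        rw [mem_ball_zero_iff, this]; exact hv
      have hD := (hd.differentiableAt (isOpen_ball.mem_nhds hb)).hasDerivAt
      have hD2 := hD.comp z ((hasDerivAt_id z).const_mul v)
      have hzz := hz0 z hz
      have e3 : ld h (v * z) * h (v * z) / z = deriv h (v * z) * (v * 1) := by
        rw [ld_mul h0 hne (by simpa using hb) (mul_ne_zero hv0 hzz)]
        field_simp
      simp only [e3]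
      exact hD2)
  intro z ζ hz hζ hzζ
  rw [e z hz, e ζ hζ]
  exact ⟨hnz ζ hζ, tw z ζ hz hζ hzζ⟩

lemma schwarz_car {p : ℂ → ℂ} (hp : DifferentiableOn ℂ p (ball 0 1)) (hp0 : p 0 = 1)
    (hm : ∀ z : ℂ, ‖z‖ < 1 → p z ∈ omegaCar) {z : ℂ} (hz : ‖z‖ ≤ 1 / 2) : p z ∈ Kset := by
  have hsq : ∀ z : ℂ, ‖z‖ < 1 → ∃ u : ℂ, ‖u‖ < 1 ∧ p z = 1 + u + u ^ 2 / 2 ∧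
      2 * p z - 1 = (1 + u) ^ 2 ∧ 0 < (1 + u).re := by
    intro z hz
    obtain ⟨u, hu, hpu⟩ := hm z hz
    refine ⟨u, hu, hpu, by rw [hpu]; ring, ?_⟩
    have := (abs_le.1 (abs_re_le_norm u)).1
    simp only [add_re, one_re]; linarith
  have hval : ∀ (z u : ℂ), 2 * p z - 1 = (1 + u) ^ 2 → 0 < (1 + u).re →
      (2 * p z - 1) ^ (2⁻¹ : ℂ) - 1 = u := by
    intro z u h1 h2
    rw [h1, sq_cpow_two_inv h2]; ring
  have hD : DifferentiableOn ℂ (fun z => (2 * p z - 1) ^ (2⁻¹ : ℂ) - 1) (ball 0 1) := by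
    refine DifferentiableOn.sub (DifferentiableOn.cpow (by fun_prop) (by fun_prop) ?_) (by fun_prop)
    intro z hz
    obtain ⟨u, -, -, h1, h2⟩ := hsq z (by simpa using hz)
    show 2 * p z - 1 ∈ slitPlane
    rw [h1, mem_slitPlane_iff]
    by_cases hy : u.im = 0
    · left
      have : ((1 + u) ^ 2).re = (1 + u).re ^ 2 := by
        rw [pow_two, mul_re]; simp [hy]; ring
      rw [this]; positivity
    · right
      have : ((1 + u) ^ 2).im = 2 * (1 + u).re * u.im := by
        rw [pow_two, mul_im]; simp; ring
      rw [this]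
      exact mul_ne_zero (by positivity) hy
  have hS := Complex.norm_le_norm_of_mapsTo_ball (z := z) hD (by
    intro w hw
    obtain ⟨u, hu, -, h1, h2⟩ := hsq w (by simpa using hw)
    rw [mem_closedBall_zero_iff]
    simp only [hval w u h1 h2]
    exact hu.le) (by simp [hp0]; norm_num) (by linarith)
  obtain ⟨u, hu, hpu, h1, h2⟩ := hsq z (by linarith)
  simp only [hval z u h1 h2] at hS
  rw [hpu]
  exact mem_Kset (hS.trans hz)

lemma re_inv_gt {u : ℂ} (hu : ‖1 - u‖ < 1) : u ≠ 0 ∧ 1 / 2 < (u⁻¹).re := by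
  have h1 : ‖1 - u‖ ^ 2 < 1 := by nlinarith [norm_nonneg (1 - u)]
  rw [Complex.sq_norm, normSq_apply] at h1
  simp only [sub_re, sub_im, one_re, one_im] at h1
  have hu0 : u ≠ 0 := by rintro rfl; simp at hu
  refine ⟨hu0, ?_⟩
  have hn : 0 < normSq u := normSq_pos.2 hu0
  rw [inv_re, lt_div_iff₀ hn, normSq_apply]
  nlinarith

lemma exists_coef {p : ℂ → ℂ} (hp : DifferentiableOn ℂ p (ball 0 1)) :
    ∃ F : ℕ → ℂ, Conv F ∧ ∀ z : ℂ, ‖z‖ < 1 → p z = PS F z := by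
  refine ⟨fun n => ((n.factorial : ℂ))⁻¹ * iteratedDeriv n p 0, ?_⟩
  have h : ∀ z : ℂ, ‖z‖ < 1 →
      HasSum (fun n : ℕ => ((n.factorial : ℂ))⁻¹ * iteratedDeriv n p 0 * z ^ n) (p z) := by
    intro z hz
    refine (Complex.hasSum_taylorSeries_on_ball hp (z := z) (by simpa using hz)).congr_fun
      fun n => ?_
    simp only [sub_zero, smul_eq_mul]; ring
  exact ⟨fun z hz => (h z hz).summable, fun z hz => (h z hz).tsum_eq.symm⟩

theorem stmt_3 (f g : ℂ → ℂ) (a b : ℕ → ℂ)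
    (hf : SCar f)
    (hfa : ∀ z : ℂ, ‖z‖ < 1 → f z = ∑' n : ℕ, a n * z ^ n)
    (ha0 : a 0 = 0) (ha1 : a 1 = 1)
    (hgd : DifferentiableOn ℂ g (Metric.ball (0 : ℂ) 1))
    (hg0 : g 0 = 0) (hg1 : deriv g 0 = 1)
    (hgconv : ∀ z : ℂ, ‖z‖ < 1 → deriv g z ≠ 0 ∧
      0 < (1 + z * deriv (deriv g) z / deriv g z).re)
    (hgb : ∀ z : ℂ, ‖z‖ < 1 → g z = ∑' n : ℕ, b n * z ^ n)
    (hb0 : b 0 = 0) (hb1 : b 1 = 1)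
    (ρ : ℝ) (hρ0 : 0 < ρ) (hρ : ρ ≤ 1 / 2) :
    SCar (fun z : ℂ => (∑' n : ℕ, a n * b n * ((ρ : ℂ) * z) ^ n) / (ρ : ℂ)) := by
  obtain ⟨hfd, hf0, hf1, hfne, hfm⟩ := hf
  have hρc : (ρ : ℂ) ≠ 0 := by exact_mod_cast hρ0.ne'
  have hρn : ‖(ρ : ℂ)‖ = ρ := by rw [norm_real, Real.norm_of_nonneg hρ0.le]
  have hρ1 : ‖(ρ : ℂ)‖ < 1 := by rw [hρn]; linarith
  have hfPS : ∀ z : ℂ, ‖z‖ < 1 → f z = PS a z := hfa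
  have hgPS : ∀ z : ℂ, ‖z‖ < 1 → g z = PS b z := hgb
  have ca : Conv a := conv_of_ne fun z hz h0 => by rw [← hfPS z hz]; exact hfne z hz h0
  have hgl : ∀ z : ℂ, ‖z‖ < 1 → dslope g 0 z ≠ 0 ∧ 1 / 2 < (ld g z).re := by
    intro z hz
    have h := re_inv_gt (marx hgd hg0 hgconv z hz)
    rw [inv_div] at h
    exact ⟨fun h0 => h.1 (by rw [h0, zero_div]), h.2⟩
  have hgne : ∀ z : ℂ, ‖z‖ < 1 → z ≠ 0 → g z ≠ 0 := by
    intro z hz h0 h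
    exact (hgl z hz).1 (by rw [dslope0 hg0 h0, h, zero_div])
  have cb : Conv b := conv_of_ne fun z hz h0 => by rw [← hgPS z hz]; exact hgne z hz h0
  have hpd := ld_diff hfd hf0 hf1 hfne
  have hpm : ∀ z : ℂ, ‖z‖ < 1 → ld f z ∈ omegaCar := by
    intro z hz
    by_cases h0 : z = 0
    · rw [h0, ld_zero hf1]; exact ⟨0, by simp, by simp⟩
    · rw [ld_eq hf0 h0]; exact hfm z hz h0
  have hpK : ∀ z : ℂ, ‖z‖ ≤ 1 / 2 → ld f z ∈ Kset := fun z hz =>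
    schwarz_car hpd (ld_zero hf1) hpm hz
  obtain ⟨F', cF, hF'⟩ := exists_coef hpd
  have gA : Geo fun n => a n * (ρ : ℂ) ^ n := ca.geo hρ1
  have gF : Geo fun n => F' n * (ρ : ℂ) ^ n := cF.geo hρ1
  have tA : TP fun n => a n * (ρ : ℂ) ^ n := by
    refine TP_gen hfd hf0 hf1 hfne hfPS hρc hρ1 fun z hz => ?_
    have := Kset_re' (hpK z (by rw [hρn] at hz; linarith))
    linarith
  have hsc : ∀ (c : ℕ → ℂ) (z : ℂ), PS (fun n => c n * (ρ : ℂ) ^ n) z = PS c (ρ * z) := by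
    intro c z
    unfold PS
    refine tsum_congr fun n => ?_
    rw [mul_pow]; ring
  have hρz : ∀ z : ℂ, ‖z‖ = 1 → ‖(ρ : ℂ) * z‖ = ρ := fun z hz => by
    rw [norm_mul, hz, mul_one, hρn]
  have hderiv : ∀ z : ℂ, ‖z‖ < 1 → deriv f z = deriv (PS a) z := by
    intro z hz
    refine Filter.EventuallyEq.deriv_eq ?_
    filter_upwards [isOpen_ball.mem_nhds (show z ∈ ball (0 : ℂ) 1 by simpa using hz)] with w hw
    exact hfPS w (by simpa using hw)
  have main : ∀ z0 : ℂ, ‖z0‖ < 1 → z0 ≠ 0 →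
      QQ (fun n => a n * (ρ : ℂ) ^ n) (fun n => b n * z0 ^ n) 0 ≠ 0 ∧
      (∑' n : ℕ, (n : ℂ) * (a n * (ρ : ℂ) ^ n) * (b n * z0 ^ n)) /
        QQ (fun n => a n * (ρ : ℂ) ^ n) (fun n => b n * z0 ^ n) 0 ∈ Kset := by
    intro z0 hz0 hz00
    have tB : ∀ v : ℂ, v ≠ 0 → ‖v‖ ≤ 1 → TP fun n => b n * z0 ^ n * v ^ n := by
      intro v hv0 hv
      have hn : ‖z0 * v‖ < 1 := by
        rw [norm_mul]
        exact lt_of_le_of_lt (mul_le_of_le_one_right (norm_nonneg _) hv) hz0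
      have := TP_gen hgd hg0 hg1 hgne hgPS (mul_ne_zero hz00 hv0) hn fun z hz =>
        (hgl z (hz.trans_lt hn)).2
      have e : (fun n => b n * z0 ^ n * v ^ n) = fun n => b n * (z0 * v) ^ n := by
        funext n; rw [mul_pow]; ring
      rw [e]; exact this
    have hpq := fun σ (hσ : ‖σ‖ = 1) => posQ (σ := σ) gA.summable (cb.geo hz0) (by simp [ha0])
      (by simp [hb0]) (by simpa [ha1] using hρ0.ne') (by simpa [hb1] using hz00) tA tB hσ
    have hN := (hpq 1 (by simp)).1
    refine ⟨hN, ?_⟩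
    refine core Kset_convex Kset_closed gA.summable gA.nmul gF.summable (cb.geo hz0) hN
      (fun σ hσ => (hpq σ hσ).2) ?_ ?_
    · intro z hz
      have hlt : ‖(ρ : ℂ) * z‖ < 1 := by rw [hρz z hz]; linarith
      have hzn : (ρ : ℂ) * z ≠ 0 := by
        intro h
        have := hρz z hz
        rw [h, norm_zero] at this
        linarith
      rw [hsc, hsc, ← hF' _ hlt, ← hfPS _ hlt, ld_mul hf0 hfne hlt hzn, hderiv _ hlt,
        PS_deriv' ca hlt, ← hsc]
      unfold PS
      exact tsum_congr fun n => by ring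
    · intro z hz
      have hlt : ‖(ρ : ℂ) * z‖ < 1 := by rw [hρz z hz]; linarith
      rw [hsc, ← hF' _ hlt]
      exact hpK _ (by rw [hρz z hz]; exact hρ)
  obtain ⟨d, hd⟩ : ∃ d : ℕ → ℂ, d = fun n => (a n * (ρ : ℂ) ^ n) * b n / ρ := ⟨_, rfl⟩
  have hh : (fun z : ℂ => (∑' n : ℕ, a n * b n * ((ρ : ℂ) * z) ^ n) / (ρ : ℂ)) = PS d := by
    funext z
    unfold PS
    rw [← tsum_div_const]
    refine tsum_congr fun n => ?_
    rw [hd, mul_pow]; ring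
  have cd : Conv d := by
    intro z hz
    obtain ⟨K, hK⟩ := Bdd.of_summable gA.summable
    refine Summable.of_norm_bounded (((cb z hz).norm).mul_left (K / ρ)) fun n => ?_
    have e : d n * z ^ n = (a n * (ρ : ℂ) ^ n) / ρ * (b n * z ^ n) := by rw [hd]; ring
    rw [e, norm_mul, norm_div, hρn]
    gcongr
    exact hK n
  have hq : ∀ z0 : ℂ, PS d z0 =
      QQ (fun n => a n * (ρ : ℂ) ^ n) (fun n => b n * z0 ^ n) 0 / ρ := by
    intro z0
    unfold PS QQ
    rw [← tsum_div_const]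
    refine tsum_congr fun n => ?_
    rw [hd]; simp only [zero_add]; ring
  rw [hh]
  refine ⟨fun z hz => (PS_deriv cd (by simpa using hz)).1.differentiableWithinAt, ?_, ?_, ?_, ?_⟩
  · unfold PS
    rw [tsum_eq_single 0]
    · simp [hd, ha0]
    · intro n hn; simp [hn]
  · rw [PS_deriv0 cd, hd]
    simp [ha1, hb1, hρc]
  · intro z hz h0
    rw [hq]
    exact div_ne_zero (main z hz h0).1 hρc
  · intro z hz h0
    have hN := (main z hz h0).1
    have hK := Kset_sub (main z hz h0).2
    rw [PS_deriv' cd hz, hq]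
    convert hK using 1
    have e : PS (fun n => (n : ℂ) * d n) z =
        (∑' n : ℕ, (n : ℂ) * (a n * (ρ : ℂ) ^ n) * (b n * z ^ n)) / ρ := by
      unfold PS
      rw [← tsum_div_const]
      refine tsum_congr fun n => ?_
      rw [hd]; ring
    rw [e, div_div_div_cancel_right₀ hρc]
end

section
/- If f ∈ S*_car, then Re(z f'(z)/f(z)) > 1/4 for every z ∈ 𝔻 \ {0}; consequently S*_car ⊂ S*(α), the class of starlike functions of order α, for every 0 ≤ α ≤ 1/4. -/
open Complex Metric

theorem stmt_4 (f : ℂ → ℂ) (hf : SCar f) :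
    (∀ z : ℂ, ‖z‖ < 1 → z ≠ 0 → 1 / 4 < (z * deriv f z / f z).re) ∧
    (∀ α : ℝ, 0 ≤ α → α ≤ 1 / 4 →
      ∀ z : ℂ, ‖z‖ < 1 → z ≠ 0 → α < (z * deriv f z / f z).re) := by
  have key : ∀ z : ℂ, ‖z‖ < 1 → z ≠ 0 → 1 / 4 < (z * deriv f z / f z).re := by
    intro z hz hz0
    obtain ⟨u, hu, hw⟩ := hf.2.2.2.2 z hz hz0
    rw [hw]
    have h1 : u.re * u.re + u.im * u.im < 1 := by
      rw [← Complex.normSq_apply, Complex.normSq_eq_norm_sq]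
      nlinarith [norm_nonneg u]
    have h2 : (1 + u + u ^ 2 / 2).re = 1 + u.re + (u.re * u.re - u.im * u.im) / 2 := by
      have h3 : u ^ 2 / 2 = ((1 / 2 : ℝ) : ℂ) * (u * u) := by
        push_cast
        ring
      rw [h3, Complex.add_re, Complex.add_re, Complex.re_ofReal_mul, Complex.mul_re,
        Complex.one_re]
      ring
    rw [h2]
    nlinarith [sq_nonneg (u.re + 1 / 2)]
  exact ⟨key, fun α _ hα z hz hz0 => lt_of_le_of_lt hα (key z hz hz0)⟩
end

section
/- If f ∈ S*_car, then |arg(z f'(z)/f(z))| < arctan(3√15/5) for every z ∈ 𝔻 \ {0}; consequently S*_car ⊂ SS*(β), the class of strongly starlike functions of order β, for every β with β₀ ≤ β ≤ 1, where β₀ = (2/π)·arctan(3√15/5). -/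
open Complex Metric

/-- A point of the cardioid-type domain lies in the sector of half-angle `arctan (3√15/5)`. -/
theorem omegaCar_arg {w : ℂ} (hw : w ∈ omegaCar) :
    |w.arg| < Real.arctan (3 * Real.sqrt 15 / 5) := by
  obtain ⟨u, hu, rfl⟩ := hw
  have hn : u.re ^ 2 + u.im ^ 2 < 1 := by
    have h1 : ‖u‖ ^ 2 < 1 := by nlinarith [norm_nonneg u]
    rw [Complex.sq_norm, Complex.normSq_apply] at h1
    nlinarith
  set w : ℂ := 1 + u + u ^ 2 / 2 with hw
  have hre : w.re = 1 + u.re + (u.re ^ 2 - u.im ^ 2) / 2 := by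
    simp [hw, pow_two]
  have him : w.im = u.im * (1 + u.re) := by
    simp [hw, pow_two]; ring
  have hs0 : 0 < Real.sqrt 15 := Real.sqrt_pos.mpr (by norm_num)
  have hs2 : Real.sqrt 15 ^ 2 = 15 := Real.sq_sqrt (by norm_num)
  set s := Real.sqrt 15
  set x := u.re
  set y := u.im
  have key : 0 < 4 / 3 * (1 + x) ^ 2 + 3 - 4 * y ^ 2 := by
    nlinarith [sq_nonneg (4 * x + 1)]
  have hkey := mul_pos hs0 key
  have hpos : 0 < w.re := by
    rw [hre]; nlinarith [sq_nonneg (1 + x), sq_nonneg (2 * x + 1)]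
  have hub : w.im < (3 * s / 5) * w.re := by
    rw [hre, him]
    nlinarith [mul_nonneg hs0.le (sq_nonneg (y - s / 3 * (1 + x)))]
  have hlb : -((3 * s / 5) * w.re) < w.im := by
    rw [hre, him]
    nlinarith [mul_nonneg hs0.le (sq_nonneg (y + s / 3 * (1 + x)))]
  have harg : w.arg = Real.arctan (w.im / w.re) := by
    have h2 : |w.arg| < Real.pi / 2 := Complex.abs_arg_lt_pi_div_two_iff.mpr (Or.inl hpos)
    rw [abs_lt] at h2
    rw [← Complex.tan_arg, Real.arctan_tan (by linarith) h2.2]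
  rw [harg, abs_lt, ← Real.arctan_neg]
  constructor
  · apply Real.arctan_strictMono
    rw [lt_div_iff₀ hpos]; linarith
  · apply Real.arctan_strictMono
    rw [div_lt_iff₀ hpos]; exact hub

theorem stmt_5 (f : ℂ → ℂ) (hf : SCar f) :
    (∀ z : ℂ, ‖z‖ < 1 → z ≠ 0 →
      |(z * deriv f z / f z).arg| < Real.arctan (3 * Real.sqrt 15 / 5)) ∧
    (∀ β : ℝ, (2 / Real.pi) * Real.arctan (3 * Real.sqrt 15 / 5) ≤ β → β ≤ 1 →
      ∀ z : ℂ, ‖z‖ < 1 → z ≠ 0 →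
        |(z * deriv f z / f z).arg| < β * Real.pi / 2) := by
  have h1 : ∀ z : ℂ, ‖z‖ < 1 → z ≠ 0 →
      |(z * deriv f z / f z).arg| < Real.arctan (3 * Real.sqrt 15 / 5) :=
    fun z hz hz0 => omegaCar_arg (hf.2.2.2.2 z hz hz0)
  refine ⟨h1, fun β hβ _ z hz hz0 => (h1 z hz hz0).trans_le ?_⟩
  have hpi := Real.pi_pos
  rw [div_mul_eq_mul_div, div_le_iff₀ hpi] at hβ
  linarith
end

section
/- Let k ≥ 5/3 and let f be analytic on 𝔻 with f(0) = 0, f'(0) = 1, f(z) ≠ 0 on 𝔻 \ {0}, and suppose Re(z f'(z)/f(z)) > k·|z f'(z)/f(z) − 1| for every z ∈ 𝔻 \ {0} (i.e. f is k-starlike). Then f ∈ S*_car; that is, k-S* ⊂ S*_car for all k ≥ 5/3. -/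
open Complex Metric

set_option maxHeartbeats 4000000 in
lemma car_aux (s : ℂ) (h : 5 / 3 * ‖s‖ < s.re + 1) : 1 + s ∈ omegaCar := by
  obtain ⟨v, hv, hx⟩ : ∃ v : ℂ, v ^ 2 = 1 + 2 * s ∧ 0 ≤ v.re := by
    obtain ⟨v, hv⟩ := IsAlgClosed.exists_pow_nat_eq (1 + 2 * s) (n := 2) (by norm_num)
    rcases le_total 0 v.re with h0 | h0
    · exact ⟨v, hv, h0⟩
    · exact ⟨-v, by rw [neg_sq, hv], by simpa using h0⟩
  refine ⟨v - 1, ?_, by linear_combination (-1 / 2 : ℂ) * hv⟩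
  have hre := congrArg Complex.re hv
  have him := congrArg Complex.im hv
  simp [pow_two] at hre him
  have hn : ‖s‖ ^ 2 = s.re ^ 2 + s.im ^ 2 := by
    rw [Complex.sq_norm, Complex.normSq_apply]; ring
  have hn1 : ‖v - 1‖ ^ 2 = (v.re - 1) ^ 2 + v.im ^ 2 := by
    rw [Complex.sq_norm, Complex.normSq_apply]; simp; ring
  have hp := norm_nonneg s
  have hp1 := norm_nonneg (v - 1)
  generalize ‖s‖ = n at *
  generalize ‖v - 1‖ = m at *
  generalize s.re = a at *
  generalize s.im = b at *
  generalize v.re = x at *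
  generalize v.im = y at *
  have hE : 25 * (a ^ 2 + b ^ 2) < 9 * (a + 1) ^ 2 := by
    have h1 : (5 / 3 * n) ^ 2 < (a + 1) ^ 2 := pow_lt_pow_left₀ h (by linarith) (by norm_num)
    rw [mul_pow, hn] at h1
    linarith
  have ha1 : a < 3 / 2 := by nlinarith [sq_nonneg b]
  have ha2 : -3 / 8 < a := by nlinarith [sq_nonneg b]
  obtain ⟨t, ht0, ht⟩ : ∃ t : ℝ, 0 ≤ t ∧ t ^ 2 = 3 + 4 * a :=
    ⟨√(3 + 4 * a), Real.sqrt_nonneg _, Real.sq_sqrt (by linarith)⟩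
  have ht3 : t < 3 := by nlinarith
  have ht1 : 1 < t := by nlinarith
  have hb : b = x * y := by linarith
  have ha : a = (t ^ 2 - 3) / 4 := by linarith
  have hr2 : (x ^ 2 + y ^ 2) ^ 2 = (1 + 2 * a) ^ 2 + 4 * b ^ 2 := by
    have : 1 + 2 * a = x ^ 2 - y ^ 2 := by linarith
    rw [this, hb]; ring
  have hq : 9 / 4 * t ^ 4 + 9 / 2 * t ^ 2 - 50 * t - 291 / 4 ≤ 0 := by
    have : 9 / 4 * t ^ 4 + 9 / 2 * t ^ 2 - 50 * t - 291 / 4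
        = (t - 3) * (9 / 4 * t ^ 3 + 27 / 4 * t ^ 2 + 99 / 4 * t + 97 / 4) := by ring
    rw [this]
    exact mul_nonpos_of_nonpos_of_nonneg (by linarith) (by positivity)
  have hr : (x ^ 2 + y ^ 2) ^ 2 < (1 + t) ^ 2 := by
    have h1 : 25 * (x ^ 2 + y ^ 2) ^ 2 < 61 + 172 * a + 36 * a ^ 2 := by
      rw [hr2]; linarith
    rw [ha] at h1
    linarith
  have hr' : x ^ 2 + y ^ 2 < 1 + t := lt_of_pow_lt_pow_left₀ 2 (by linarith) hr
  have hr0 : 0 ≤ x ^ 2 + y ^ 2 := by positivity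
  have h4 : (x ^ 2 + y ^ 2 - 1) ^ 2 < t ^ 2 := sq_lt_sq' (by linarith) (by linarith)
  have h5 : (x ^ 2 + y ^ 2) ^ 2 < (2 * x) ^ 2 := by linarith
  have h6 : x ^ 2 + y ^ 2 < 2 * x := lt_of_pow_lt_pow_left₀ 2 (by linarith) h5
  have h7 : m ^ 2 < 1 ^ 2 := by rw [hn1]; linarith
  exact lt_of_pow_lt_pow_left₀ 2 (by norm_num) h7

theorem stmt_6 (k : ℝ) (hk : 5 / 3 ≤ k) (f : ℂ → ℂ)
    (hfd : DifferentiableOn ℂ f (Metric.ball (0 : ℂ) 1))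
    (hf0 : f 0 = 0) (hf1 : deriv f 0 = 1)
    (hfne : ∀ z : ℂ, ‖z‖ < 1 → z ≠ 0 → f z ≠ 0)
    (hstar : ∀ z : ℂ, ‖z‖ < 1 → z ≠ 0 →
      k * ‖z * deriv f z / f z - 1‖ < (z * deriv f z / f z).re) :
    SCar f := by
  refine ⟨hfd, hf0, hf1, hfne, fun z hz hz0 => ?_⟩
  have h := hstar z hz hz0
  generalize z * deriv f z / f z = w at *
  have := car_aux (w - 1) (by
    have := mul_le_mul_of_nonneg_right hk (norm_nonneg (w - 1))
    simp only [Complex.sub_re, Complex.one_re]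
    linarith)
  simpa using this
end

section
/- Let α₀ = (e − 2)/(2(e − 1)) and let α₀ ≤ α < 1. If f is analytic on 𝔻 with f(0) = 0, f'(0) = 1, f(z) ≠ 0 on 𝔻 \ {0}, and z f'(z)/f(z) ∈ {α + (1 − α)e^w : w ∈ 𝔻} for every z ∈ 𝔻 \ {0} (i.e. f ∈ S*_e(α)), then f ∈ S*_car. -/
open Complex Metric

lemma aux_Q {x E P a c : ℝ} (hE : E = Real.exp x) (hc : c = Real.exp a) (hxa : x ≤ a)
    (ha0 : 0 ≤ a) (ha : a ≤ 1) (hP : E * (1 + x ^ 2) / 2 ≤ P) :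
    E ^ 2 + 1 - 2 * P ≤ 1 + c * (c - 1 - a ^ 2) := by
  have hE0 : 0 < E := hE ▸ Real.exp_pos x
  have hEc : E ≤ c := by rw [hE, hc]; exact Real.exp_le_exp.2 hxa
  have hE1 : 1 + x ≤ E := by rw [hE]; linarith [Real.add_one_le_exp x]
  have hcE : E * (1 + (a - x)) ≤ c := by
    have h1 : c = E * Real.exp (a - x) := by rw [hE, hc, ← Real.exp_add]; ring_nf
    rw [h1]
    exact mul_le_mul_of_nonneg_left (by linarith [Real.add_one_le_exp (a - x)]) hE0.le
  have hk : E - 1 - x ^ 2 ≤ c - 1 - a ^ 2 := by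
    nlinarith [mul_nonneg (sub_nonneg.2 hxa) (sub_nonneg.2 hE1), mul_nonneg (sub_nonneg.2 hxa) (sub_nonneg.2 ha)]
  have hc2 : 0 ≤ c - 1 - a ^ 2 := by
    have : 1 + a ≤ c := by rw [hc]; linarith [Real.add_one_le_exp a]
    nlinarith
  nlinarith [mul_le_mul_of_nonneg_left hk hE0.le, mul_le_mul_of_nonneg_right hEc hc2]

lemma aux_exp08 : Real.exp 0.8 < 2.226 := by
  have h : Real.exp 0.8 ^ 5 = Real.exp 1 ^ 4 := by
    rw [← Real.exp_nat_mul, ← Real.exp_nat_mul]; norm_num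
  have h1 := Real.exp_one_lt_d9
  have h0 := Real.exp_pos 1
  by_contra hcon
  push Not at hcon
  have h2 : (2.226 : ℝ) ^ 5 ≤ Real.exp 0.8 ^ 5 := pow_le_pow_left₀ (by norm_num) hcon 5
  have h3 : Real.exp 1 ^ 4 ≤ 2.7182818286 ^ 4 := pow_le_pow_left₀ h0.le h1.le 4
  rw [h] at h2
  have := h2.trans h3
  norm_num at this

lemma aux_exp08' : 2.2 < Real.exp 0.8 := by
  have h : Real.exp 0.8 ^ 5 = Real.exp 1 ^ 4 := by
    rw [← Real.exp_nat_mul, ← Real.exp_nat_mul]; norm_num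
  have h1 := Real.exp_one_gt_d9
  by_contra hcon
  push Not at hcon
  have h2 : Real.exp 0.8 ^ 5 ≤ (2.2 : ℝ) ^ 5 := pow_le_pow_left₀ (Real.exp_pos _).le hcon 5
  have h3 : (2.7182818283 : ℝ) ^ 4 ≤ Real.exp 1 ^ 4 := pow_le_pow_left₀ (by norm_num) h1.le 4
  rw [h] at h2
  have := h3.trans h2
  norm_num at this

lemma aux_exp05 : Real.exp 0.5 < 1.65 := by
  have h : Real.exp 0.5 ^ 2 = Real.exp 1 := by
    rw [← Real.exp_nat_mul]; norm_num
  have h1 := Real.exp_one_lt_d9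
  by_contra hcon
  push Not at hcon
  nlinarith

lemma aux_exp05' : 1.64 < Real.exp 0.5 := by
  have h : Real.exp 0.5 ^ 2 = Real.exp 1 := by
    rw [← Real.exp_nat_mul]; norm_num
  have h1 := Real.exp_one_gt_d9
  by_contra hcon
  push Not at hcon
  nlinarith [Real.exp_pos 0.5]

set_option maxHeartbeats 1000000 in
lemma aux_key {β x y X Y r : ℝ} (hβ0 : 0 < β) (hβ : β * (Real.exp 1 - 1) ≤ Real.exp 1)
    (hxy : x ^ 2 + y ^ 2 < 1)
    (hX : X = 1 + β * (Real.exp x * Real.cos y - 1)) (hY : Y = β * (Real.exp x * Real.sin y))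
    (hr0 : 0 ≤ r) (hr : r ^ 2 = X ^ 2 + Y ^ 2) : r ^ 2 < 2 * (r + X) := by
  have he1 := Real.exp_one_gt_d9
  have he2 := Real.exp_one_lt_d9
  obtain ⟨E, hE⟩ : ∃ E, E = Real.exp x := ⟨_, rfl⟩
  have hE0 : 0 < E := hE ▸ Real.exp_pos x
  have hcos : (1 + x ^ 2) / 2 < Real.cos y := by
    linarith [Real.one_sub_sq_div_two_le_cos (x := y)]
  obtain ⟨P, hPd⟩ : ∃ P, P = E * Real.cos y := ⟨_, rfl⟩
  have hP : E * (1 + x ^ 2) / 2 < P := by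
    rw [hPd]; nlinarith [mul_lt_mul_of_pos_left hcos hE0]
  have hx1 : x ≤ 1 := by nlinarith
  have hxm1 : -1 ≤ x := by nlinarith
  rw [← hE, ← hPd] at hX
  rw [← hE] at hY
  have hee : Real.exp (x + 1) = E * Real.exp 1 := by rw [hE, Real.exp_add]
  -- positivity of X
  have hPe : 1 < P * Real.exp 1 := by
    have h1 : 1 + (x + 1) + (x + 1) ^ 2 / 2 ≤ Real.exp (x + 1) :=
      Real.quadratic_le_exp_of_nonneg (by linarith)
    have h2 : 2 ≤ Real.exp (x + 1) * (1 + x ^ 2) := by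
      have := mul_le_mul_of_nonneg_right h1 (by positivity : 0 ≤ 1 + x ^ 2)
      nlinarith [sq_nonneg ((x + 1) ^ 2)]
    have h3 := mul_lt_mul_of_pos_right hP (Real.exp_pos 1)
    rw [hee] at h2
    linarith
  have hX0 : 0 < X := by
    have h1 : 0 < Real.exp 1 * X := by
      rw [hX]
      nlinarith [mul_lt_mul_of_pos_left hPe hβ0]
    exact pos_of_mul_pos_right h1 (Real.exp_pos 1).le
  obtain ⟨Q, hQ⟩ : ∃ Q, Q = E ^ 2 + 1 - 2 * P := ⟨_, rfl⟩
  have hD : β ^ 2 * Q = r ^ 2 + 1 - 2 * X := by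
    rw [hr, hX, hY, hQ, hPd]
    linear_combination (-(β ^ 2 * E ^ 2)) * Real.sin_sq_add_cos_sq y
  have hQe : Q ≤ (Real.exp 1 - 1) ^ 2 := by
    have := aux_Q hE rfl hx1 zero_le_one le_rfl hP.le
    rw [hQ]; linarith
  have hβ1 : β < 1.582 := by nlinarith
  have hβ2 : β ^ 2 < 2.5028 := by nlinarith
  obtain ⟨D, hDd⟩ : ∃ D, D = β ^ 2 * Q := ⟨_, rfl⟩
  have hDe : D < 7.39 := by
    have h1 : D ≤ (β * (Real.exp 1 - 1)) ^ 2 := by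
      rw [hDd, mul_pow]; exact mul_le_mul_of_nonneg_left hQe (sq_nonneg β)
    have h2 : (β * (Real.exp 1 - 1)) ^ 2 ≤ Real.exp 1 ^ 2 :=
      pow_le_pow_left₀ (mul_nonneg hβ0.le (by linarith)) hβ 2
    nlinarith
  rw [← hDd] at hD
  by_contra hcon
  push Not at hcon
  have hcD : 1 + 2 * r ≤ D := by linarith
  have hmain : 8 * X ≤ (D - 1) * (D - 5) := by
    have h1 : (2 * r) ^ 2 ≤ (D - 1) ^ 2 := pow_le_pow_left₀ (by linarith) (by linarith) 2
    linarith
  have hD5 : 5 < D := by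
    by_contra h
    push Not at h
    have h1 : 0 ≤ (D - 1) * (5 - D) := mul_nonneg (by linarith) (by linarith)
    linarith
  have hx5 : 0.5 < x := by
    by_contra h
    push Not at h
    have h1 := aux_Q hE rfl h (by norm_num) (by norm_num) hP.le
    rw [← hQ] at h1
    have h2 : Real.exp 0.5 * (Real.exp 0.5 - 1 - 0.5 ^ 2) ≤ 1.65 * 0.4 :=
      mul_le_mul aux_exp05.le (by linarith [aux_exp05]) (by linarith [aux_exp05']) (by norm_num)
    have h3 : Q ≤ 1.7 := by linarith
    linarith [mul_le_mul_of_nonneg_left h3 (sq_nonneg β)]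
  have hE5 : 1.64 < E := by
    rw [hE]; exact aux_exp05'.trans (Real.exp_lt_exp.2 hx5)
  have hP1 : 1 ≤ P := by
    have h0 : (0.5 : ℝ) ^ 2 ≤ x ^ 2 := pow_le_pow_left₀ (by norm_num) hx5.le 2
    have h1 : 1.64 * 1.25 ≤ E * (1 + x ^ 2) :=
      mul_le_mul hE5.le (by linarith) (by norm_num) hE0.le
    linarith
  have hX1 : 1 ≤ X := by linarith [mul_nonneg hβ0.le (sub_nonneg.2 hP1)]
  have hD6 : 6 < D := by
    by_contra h
    push Not at h
    have h1 : (D - 1) * (D - 5) ≤ 5 * 1 :=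
      mul_le_mul (by linarith) (by linarith) (by linarith) (by norm_num)
    linarith
  have hx8 : 0.8 < x := by
    by_contra h
    push Not at h
    have h1 := aux_Q hE rfl h (by norm_num) (by norm_num) hP.le
    rw [← hQ] at h1
    have h2 : Real.exp 0.8 * (Real.exp 0.8 - 1 - 0.8 ^ 2) ≤ 2.226 * 0.586 :=
      mul_le_mul aux_exp08.le (by linarith [aux_exp08]) (by linarith [aux_exp08']) (by norm_num)
    have h3 : Q ≤ 2.31 := by linarith
    linarith [mul_le_mul_of_nonneg_left h3 (sq_nonneg β)]
  have hE8 : 2.2 < E := by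
    rw [hE]; exact aux_exp08'.trans (Real.exp_lt_exp.2 hx8)
  have hP8 : 1.8 ≤ P := by
    have h0 : (0.8 : ℝ) ^ 2 ≤ x ^ 2 := pow_le_pow_left₀ (by norm_num) hx8.le 2
    have h1 : 2.2 * 1.64 ≤ E * (1 + x ^ 2) :=
      mul_le_mul hE8.le (by linarith) (by norm_num) hE0.le
    linarith
  have hβ3 : 1.42 < β := by
    by_contra h
    push Not at h
    have h0 : (Real.exp 1 - 1) ^ 2 ≤ 1.7183 ^ 2 :=
      pow_le_pow_left₀ (by linarith) (by linarith) 2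
    have h1 : Q ≤ 2.953 := by linarith
    have h2 : β ^ 2 ≤ 1.42 ^ 2 := pow_le_pow_left₀ hβ0.le h 2
    linarith [mul_le_mul_of_nonneg_left h1 (sq_nonneg β)]
  have hX2 : 2.13 ≤ X := by
    have h1 : 1.42 * 0.8 ≤ β * (P - 1) :=
      mul_le_mul hβ3.le (by linarith) (by norm_num) hβ0.le
    linarith
  have h1 : (D - 1) * (D - 5) ≤ 6.39 * 2.39 :=
    mul_le_mul (by linarith) (by linarith) (by linarith) (by norm_num)
  linarith

lemma aux_pt (α : ℝ) (hα0 : (Real.exp 1 - 2) / (2 * (Real.exp 1 - 1)) ≤ α) (hα1 : α < 1)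
    (w : ℂ) (hw : ‖w‖ < 1) :
    (α : ℂ) + (1 - (α : ℂ)) * Complex.exp w ∈ omegaCar := by
  obtain ⟨s, hs, hs0⟩ : ∃ s : ℂ,
      s ^ 2 = 2 * ((α : ℂ) + (1 - (α : ℂ)) * Complex.exp w) - 1 ∧ 0 ≤ s.re := by
    obtain ⟨s, hs⟩ := IsAlgClosed.exists_pow_nat_eq
      (2 * ((α : ℂ) + (1 - (α : ℂ)) * Complex.exp w) - 1) (n := 2) (by norm_num)
    rcases le_total 0 s.re with h | h
    · exact ⟨s, hs, h⟩
    · exact ⟨-s, by rw [neg_sq, hs], by simpa using h⟩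
  have he1 := Real.exp_one_gt_d9
  have hβ : (2 * (1 - α)) * (Real.exp 1 - 1) ≤ Real.exp 1 := by
    rw [div_le_iff₀ (by linarith)] at hα0
    linarith
  have hxy : w.re ^ 2 + w.im ^ 2 < 1 := by
    have h := Complex.sq_norm w
    rw [Complex.normSq_apply] at h
    nlinarith [norm_nonneg w]
  have hre := congrArg Complex.re hs
  have him := congrArg Complex.im hs
  simp [pow_two, Complex.exp_re, Complex.exp_im] at hre him
  have hk := aux_key (β := 2 * (1 - α)) (X := s.re ^ 2 - s.im ^ 2) (Y := 2 * s.re * s.im)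
    (r := s.re ^ 2 + s.im ^ 2) (by linarith) hβ hxy (by linarith) (by linarith)
    (by positivity) (by ring)
  have hlt : s.re ^ 2 + s.im ^ 2 < 2 * s.re := by
    apply lt_of_pow_lt_pow_left₀ 2 (by linarith)
    linarith
  refine ⟨s - 1, ?_, ?_⟩
  · have h := Complex.sq_norm (s - 1)
    rw [Complex.normSq_apply] at h
    simp at h
    nlinarith [norm_nonneg (s - 1)]
  · linear_combination (-1 / 2 : ℂ) * hs

theorem stmt_7 (α : ℝ) (hα0 : (Real.exp 1 - 2) / (2 * (Real.exp 1 - 1)) ≤ α) (hα1 : α < 1)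
    (f : ℂ → ℂ)
    (hfd : DifferentiableOn ℂ f (Metric.ball (0 : ℂ) 1))
    (hf0 : f 0 = 0) (hf1 : deriv f 0 = 1)
    (hfne : ∀ z : ℂ, ‖z‖ < 1 → z ≠ 0 → f z ≠ 0)
    (hsub : ∀ z : ℂ, ‖z‖ < 1 → z ≠ 0 → ∃ w : ℂ, ‖w‖ < 1 ∧
      z * deriv f z / f z = (α : ℂ) + (1 - (α : ℂ)) * Complex.exp w) :
    SCar f := by
  refine ⟨hfd, hf0, hf1, hfne, fun z hz hz0 => ?_⟩
  obtain ⟨w, hw, h⟩ := hsub z hz hz0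
  rw [h]
  exact aux_pt α hα0 hα1 w hw
end

section
/- Let 1/2 ≤ α < 1. If f is analytic on 𝔻 with f(0) = 0, f'(0) = 1, f(z) ≠ 0 on 𝔻 \ {0}, and z f'(z)/f(z) ∈ {α + (1 − α)√(1 + w) : w ∈ 𝔻} for every z ∈ 𝔻 \ {0}, where √ denotes the principal square root (i.e. f ∈ S*_L(α)), then f ∈ S*_car. -/
open Complex Metric

lemma sqrt_facts (z : ℂ) (hz : 0 < z.re) :
    (z ^ ((1 : ℂ) / 2)) ^ 2 = z ∧ 0 < (z ^ ((1 : ℂ) / 2)).re := by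
  have hz0 : z ≠ 0 := by
    rintro rfl
    simp at hz
  constructor
  · rw [← Complex.cpow_nat_mul]
    norm_num
  · rw [Complex.cpow_def_of_ne_zero hz0, Complex.exp_re]
    apply mul_pos (Real.exp_pos _)
    have h : (Complex.log z * (1 / 2)).im = z.arg / 2 := by
      rw [show Complex.log z * (1 / 2) = Complex.log z / (2 : ℕ) by push_cast; ring,
        Complex.div_natCast_im, Complex.log_im]
      norm_num
    rw [h]
    have h1 := Complex.neg_pi_lt_arg z
    have h2 := Complex.arg_le_pi z
    have h3 : |z.arg| < Real.pi / 2 := Complex.abs_arg_lt_pi_div_two_iff.2 (Or.inl hz)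
    have h4 := abs_lt.1 h3
    have h5 := Real.pi_pos
    apply Real.cos_pos_of_mem_Ioo
    constructor <;> linarith [h4.1, h4.2]

lemma key_s8 (q : ℂ) (hq : 0 < q.re) (hn : ‖q‖ < 2) :
    ‖q ^ ((1 : ℂ) / 2) - 1‖ < 1 := by
  obtain ⟨h1, h2⟩ := sqrt_facts q hq
  set v := q ^ ((1 : ℂ) / 2) with hv
  have hN : ‖v‖ ^ 2 < 2 := by
    rw [← norm_pow, h1]; exact hn
  rw [Complex.sq_norm, Complex.normSq_apply] at hN
  have hR : q.re = v.re * v.re - v.im * v.im := by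
    rw [← h1, sq, Complex.mul_re]
  rw [hR] at hq
  have : ‖v - 1‖ ^ 2 < 1 := by
    rw [Complex.sq_norm, Complex.normSq_apply]
    simp only [Complex.sub_re, Complex.sub_im, Complex.one_re, Complex.one_im]
    rcases le_total 1 v.re with h | h <;> nlinarith
  have h0 := norm_nonneg (v - 1)
  nlinarith

theorem stmt_8 (α : ℝ) (hα0 : 1 / 2 ≤ α) (hα1 : α < 1)
    (f : ℂ → ℂ)
    (hfd : DifferentiableOn ℂ f (Metric.ball (0 : ℂ) 1))
    (hf0 : f 0 = 0) (hf1 : deriv f 0 = 1)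
    (hfne : ∀ z : ℂ, ‖z‖ < 1 → z ≠ 0 → f z ≠ 0)
    (hsub : ∀ z : ℂ, ‖z‖ < 1 → z ≠ 0 → ∃ w : ℂ, ‖w‖ < 1 ∧
      z * deriv f z / f z = (α : ℂ) + (1 - (α : ℂ)) * (1 + w) ^ ((1 : ℂ) / 2)) :
    SCar f := by
  refine ⟨hfd, hf0, hf1, hfne, fun z hz hz0 => ?_⟩
  obtain ⟨w, hw, he⟩ := hsub z hz hz0
  rw [he]
  have hwre : 0 < (1 + w).re := by
    have := Complex.abs_re_le_norm w
    have := (abs_le.1 this).1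
    simp only [Complex.add_re, Complex.one_re]
    linarith
  obtain ⟨h1, h2⟩ := sqrt_facts (1 + w) hwre
  set s := (1 + w) ^ ((1 : ℂ) / 2) with hs
  have hsn : ‖s‖ < 2 := by
    have h3 : ‖s‖ ^ 2 < 2 := by
      rw [← norm_pow, h1]
      have := norm_add_le 1 w
      rw [norm_one] at this
      linarith
    nlinarith [norm_nonneg s]
  have hqe : ∃ c : ℝ, c = 2 * (1 - α) := ⟨_, rfl⟩
  obtain ⟨c, hc⟩ := hqe
  have hc0 : 0 < c := by linarith
  have hc1 : c ≤ 1 := by linarith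
  have hre : 0 < (((1 - c : ℝ) : ℂ) + (c : ℂ) * s).re := by
    rw [Complex.add_re, Complex.ofReal_re, Complex.re_ofReal_mul]
    have := mul_pos hc0 h2
    linarith
  have hnn : ‖((1 - c : ℝ) : ℂ) + (c : ℂ) * s‖ < 2 := by
    have h := norm_add_le ((1 - c : ℝ) : ℂ) ((c : ℂ) * s)
    rw [norm_mul, Complex.norm_of_nonneg (by linarith), Complex.norm_of_nonneg hc0.le] at h
    nlinarith
  refine ⟨_, key_s8 _ hre hnn, ?_⟩
  have hsq := (sqrt_facts _ hre).1
  set v := (((1 - c : ℝ) : ℂ) + (c : ℂ) * s) ^ ((1 : ℂ) / 2) with hv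
  have : 1 + (v - 1) + (v - 1) ^ 2 / 2 = (1 + v ^ 2) / 2 := by ring
  rw [this, hsq, hc]
  push_cast
  ring
end

section
/- Let 0 < c ≤ 3/4. If f is analytic on 𝔻 with f(0) = 0, f'(0) = 1, f(z) ≠ 0 on 𝔻 \ {0}, and z f'(z)/f(z) ∈ {√(1 + cw) : w ∈ 𝔻} for every z ∈ 𝔻 \ {0}, where √ denotes the principal square root (i.e. f ∈ S*(√(1+cz))), then f ∈ S*_car. -/
open Complex Metric

lemma sqrt_re_nonneg (a : ℂ) : 0 ≤ (a ^ ((1 : ℂ) / 2)).re := by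
  by_cases h : a = 0
  · subst h
    simp
  rw [Complex.cpow_def_of_ne_zero h, Complex.exp_re]
  have h1 : (Complex.log a * (1 / 2)).im = a.arg / 2 := by
    have : (1 / 2 : ℂ) = ((1 / 2 : ℝ) : ℂ) := by push_cast; rfl
    rw [this, Complex.im_mul_ofReal, Complex.log_im]
    ring
  rw [h1]
  refine mul_nonneg (Real.exp_pos _).le (Real.cos_nonneg_of_mem_Icc ⟨?_, ?_⟩)
  · linarith [Complex.neg_pi_lt_arg a]
  · linarith [Complex.arg_le_pi a]

lemma sqrt_sq (a : ℂ) : (a ^ ((1 : ℂ) / 2)) ^ 2 = a := by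
  rw [one_div]
  exact Complex.cpow_nat_inv_pow a two_ne_zero

lemma one_le_norm_add_one (s : ℂ) (hs : 0 ≤ s.re) : 1 ≤ ‖s + 1‖ := by
  have := Complex.re_le_norm (s + 1)
  simp at this
  linarith

lemma sqrt_close (s : ℂ) (hs : 0 ≤ s.re) (h : ‖s ^ 2 - 1‖ < 3 / 4) : ‖s - 1‖ < 1 / 2 := by
  have h1 : s ^ 2 - 1 = (s - 1) * (s + 1) := by ring
  rw [h1, norm_mul] at h
  have h2 := one_le_norm_add_one s hs
  have h3 : 2 ≤ ‖s + 1‖ + ‖s - 1‖ := by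
    have := norm_sub_le (s + 1) (s - 1)
    have e : (s + 1) - (s - 1) = 2 := by ring
    rw [e] at this
    simpa using this
  have h4 := norm_nonneg (s - 1)
  by_contra! h5
  have h6 : ‖s - 1‖ < 3 / 4 := by nlinarith
  nlinarith

lemma mem_omegaCar (s : ℂ) (h : ‖s - 1‖ < 1 / 2) : s ∈ omegaCar := by
  set t : ℂ := (2 * s - 1) ^ ((1 : ℂ) / 2) with ht
  have h1 : t ^ 2 = 2 * s - 1 := sqrt_sq _
  have h2 := one_le_norm_add_one t (sqrt_re_nonneg _)
  refine ⟨t - 1, ?_, ?_⟩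
  · have h3 : (t - 1) * (t + 1) = 2 * (s - 1) := by linear_combination h1
    have h4 : ‖t - 1‖ * ‖t + 1‖ = 2 * ‖s - 1‖ := by
      rw [← norm_mul, h3, norm_mul]
      simp
    nlinarith [norm_nonneg (t - 1)]
  · linear_combination -h1 / 2

theorem stmt_9 (c : ℝ) (hc0 : 0 < c) (hc1 : c ≤ 3 / 4)
    (f : ℂ → ℂ)
    (hfd : DifferentiableOn ℂ f (Metric.ball (0 : ℂ) 1))
    (hf0 : f 0 = 0) (hf1 : deriv f 0 = 1)
    (hfne : ∀ z : ℂ, ‖z‖ < 1 → z ≠ 0 → f z ≠ 0)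
    (hsub : ∀ z : ℂ, ‖z‖ < 1 → z ≠ 0 → ∃ w : ℂ, ‖w‖ < 1 ∧
      z * deriv f z / f z = (1 + (c : ℂ) * w) ^ ((1 : ℂ) / 2)) :
    SCar f := by
  refine ⟨hfd, hf0, hf1, hfne, fun z hz hz0 => ?_⟩
  obtain ⟨w, hw, e⟩ := hsub z hz hz0
  rw [e]
  apply mem_omegaCar
  apply sqrt_close _ (sqrt_re_nonneg _)
  rw [sqrt_sq, add_sub_cancel_left, norm_mul, Complex.norm_real, Real.norm_of_nonneg hc0.le]
  nlinarith [norm_nonneg w]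
end

section
/- Let −1 < B < A ≤ 1 and suppose that either (a) 1 − B² < 2(1 − AB) ≤ 3(1 − B²) and 2A ≤ 1 + B, or (b) 3(1 − B²) ≤ 2(1 − AB) < 5(1 − B²) and 2A ≤ 3 + 5B. If f is analytic on 𝔻 with f(0) = 0, f'(0) = 1, f(z) ≠ 0 on 𝔻 \ {0}, and z f'(z)/f(z) ∈ {(1 + Aw)/(1 + Bw) : w ∈ 𝔻} for every z ∈ 𝔻 \ {0} (i.e. f belongs to the Janowski class S*[A,B]), then f ∈ S*_car. -/
open Complex Metric

lemma mem_omegaCar_of_disk (q : ℂ) (hq : ‖q‖ ^ 2 < 2 * q.re) : 1 / 2 + q ∈ omegaCar := by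
  obtain ⟨s, hs⟩ : ∃ s : ℂ, s ^ 2 = 2 * q ∧ 0 ≤ s.re := by
    obtain ⟨s, hs⟩ := IsAlgClosed.exists_pow_nat_eq (2 * q) (n := 2) (by norm_num)
    rcases le_total 0 s.re with h | h
    · exact ⟨s, hs, h⟩
    · exact ⟨-s, by rw [neg_sq, hs], by simpa using h⟩
  obtain ⟨hs, hre⟩ := hs
  have h1 : ‖s‖ ^ 2 = 2 * ‖q‖ := by
    rw [← norm_pow, hs]; simp
  have h2 : ‖s‖ ^ 2 = s.re ^ 2 + s.im ^ 2 := by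
    rw [← Complex.normSq_eq_norm_sq, Complex.normSq_apply]; ring
  have h3 : s.re ^ 2 - s.im ^ 2 = 2 * q.re := by
    have := congrArg Complex.re hs
    simp [pow_two] at this
    linarith [this]
  have h4 : s.re ^ 2 = ‖q‖ + q.re := by linarith
  have h5 : q.re ≤ ‖q‖ := Complex.re_le_norm q
  have h6 : ‖q‖ < s.re := by
    apply lt_of_pow_lt_pow_left₀ 2 hre
    linarith
  refine ⟨s - 1, ?_, ?_⟩
  · have : ‖s - 1‖ ^ 2 < 1 ^ 2 := by
      rw [← Complex.normSq_eq_norm_sq, Complex.normSq_apply]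
      simp
      nlinarith
    exact lt_of_pow_lt_pow_left₀ 2 (by norm_num) this
  · linear_combination (-1 / 2 : ℂ) * hs

lemma janowski_real (A B x t : ℝ) (hB : -1 < B) (hBA : B < A) (hB1 : B < 1)
    (h1 : 2 * A ≤ 1 + B) (h2 : 2 * A ≤ 3 + 5 * B) (ht0 : 0 ≤ t) (ht : t < 1)
    (hx1 : -t ≤ x) (hx2 : x ≤ t) :
    0 < 3 + (4 * A + 2 * B) * x + (5 * B - 2 * A) * (2 * A - B) * t ^ 2 := by
  have e1 : 0 < (3 + (5 * B - 2 * A) * t) * (1 + (2 * A - B) * t) := by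
    apply mul_pos <;> nlinarith
  have e2 : 0 < (3 - (5 * B - 2 * A) * t) * (1 - (2 * A - B) * t) := by
    apply mul_pos <;> nlinarith
  rcases le_total 0 (4 * A + 2 * B) with h | h
  · nlinarith [mul_le_mul_of_nonneg_left hx1 h]
  · nlinarith [mul_le_mul_of_nonpos_left hx2 h]

lemma janowski_mem (A B : ℝ) (w : ℂ) (hB : -1 < B) (hBA : B < A) (hB1 : B < 1)
    (h1 : 2 * A ≤ 1 + B) (h2 : 2 * A ≤ 3 + 5 * B) (hw : ‖w‖ < 1) :
    (1 + (A : ℂ) * w) / (1 + (B : ℂ) * w) ∈ omegaCar := by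
  have hx := abs_le.mp (Complex.abs_re_le_norm w)
  have key := janowski_real A B w.re ‖w‖ hB hBA hB1 h1 h2 (norm_nonneg w) hw hx.1 hx.2
  have hm : ‖w‖ ^ 2 = w.re ^ 2 + w.im ^ 2 := by
    rw [← Complex.normSq_eq_norm_sq, Complex.normSq_apply]; ring
  rw [hm] at key
  have hne : 1 + (B : ℂ) * w ≠ 0 := by
    intro h
    have h' := congrArg Complex.re h
    simp at h'
    nlinarith [hx.1, hx.2, norm_nonneg w]
  set p := (1 + (A : ℂ) * w) / (1 + (B : ℂ) * w) with hp
  have hd : ‖p - 3 / 2‖ < 1 := by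
    have e : p - 3 / 2 = (((2 * A - 3 * B : ℝ) : ℂ) * w - 1) / (2 * (1 + (B : ℂ) * w)) := by
      rw [hp, eq_div_iff (mul_ne_zero two_ne_zero hne), sub_mul, mul_left_comm, div_mul_cancel₀ _ hne]; push_cast; ring
    rw [e, norm_div, div_lt_one (norm_pos_iff.mpr (mul_ne_zero two_ne_zero hne))]
    apply lt_of_pow_lt_pow_left₀ 2 (norm_nonneg _)
    rw [← Complex.normSq_eq_norm_sq, ← Complex.normSq_eq_norm_sq, Complex.normSq_apply,
      Complex.normSq_apply]
    simp
    nlinarith [key]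
  have hq := mem_omegaCar_of_disk (p - 1 / 2) (by
    have : ‖p - 3 / 2‖ ^ 2 < 1 := by
      have := norm_nonneg (p - 3 / 2)
      nlinarith
    rw [← Complex.normSq_eq_norm_sq, Complex.normSq_apply] at this ⊢
    simp at this ⊢
    nlinarith [this])
  simpa using hq

theorem stmt_10 (A B : ℝ) (hB : -1 < B) (hBA : B < A) (hA : A ≤ 1)
    (hcond : (1 - B ^ 2 < 2 * (1 - A * B) ∧ 2 * (1 - A * B) ≤ 3 * (1 - B ^ 2) ∧
        2 * A ≤ 1 + B) ∨
      (3 * (1 - B ^ 2) ≤ 2 * (1 - A * B) ∧ 2 * (1 - A * B) < 5 * (1 - B ^ 2) ∧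
        2 * A ≤ 3 + 5 * B))
    (f : ℂ → ℂ)
    (hfd : DifferentiableOn ℂ f (Metric.ball (0 : ℂ) 1))
    (hf0 : f 0 = 0) (hf1 : deriv f 0 = 1)
    (hfne : ∀ z : ℂ, ‖z‖ < 1 → z ≠ 0 → f z ≠ 0)
    (hsub : ∀ z : ℂ, ‖z‖ < 1 → z ≠ 0 → ∃ w : ℂ, ‖w‖ < 1 ∧
      z * deriv f z / f z = (1 + (A : ℂ) * w) / (1 + (B : ℂ) * w)) :
    SCar f := by
  have hB1 : B < 1 := by linarith
  have hc : 2 * A ≤ 1 + B ∧ 2 * A ≤ 3 + 5 * B := by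
    rcases hcond with ⟨_, h2, h3⟩ | ⟨h1, _, h3⟩
    · refine ⟨h3, ?_⟩
      have : 0 ≤ (1 - B) * (3 + 5 * B - 2 * A) := by
        nlinarith [mul_le_mul_of_nonneg_left h3 (by linarith : 0 ≤ 1 + B)]
      nlinarith [nonneg_of_mul_nonneg_right this (by linarith)]
    · refine ⟨?_, h3⟩
      have : 0 ≤ (1 + B) * (1 + B - 2 * A) := by
        nlinarith [mul_le_mul_of_nonneg_left h3 (by linarith : 0 ≤ 1 - B)]
      nlinarith [nonneg_of_mul_nonneg_right this (by linarith)]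
  refine ⟨hfd, hf0, hf1, hfne, fun z hz hz0 => ?_⟩
  obtain ⟨w, hw, he⟩ := hsub z hz hz0
  rw [he]
  exact janowski_mem A B w hB hBA hB1 hc.1 hc.2 hw
end

section
/- Let M ≥ (3 + √5)/4. If f ∈ S*_car, then |z f'(z)/f(z) − M| < M for every z ∈ 𝔻 \ {0}; that is, S*_car ⊂ S*[1, −(M−1)/M] for all M ≥ (3 + √5)/4. -/
open Complex Metric

theorem stmt_11 (M : ℝ) (hM : (3 + Real.sqrt 5) / 4 ≤ M) (f : ℂ → ℂ) (hf : SCar f) :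
    ∀ z : ℂ, ‖z‖ < 1 → z ≠ 0 → ‖z * deriv f z / f z - (M : ℂ)‖ < M := by
  intro z hz hz0
  obtain ⟨u, hu, hw⟩ := hf.2.2.2.2 z hz hz0
  rw [hw]
  obtain ⟨x, y⟩ := u
  have hq : Real.sqrt 5 ^ 2 = 5 := Real.sq_sqrt (by norm_num)
  have hq2 : 2 ≤ Real.sqrt 5 := by
    apply Real.le_sqrt_of_sq_le; norm_num
  set q := Real.sqrt 5
  have hs : x ^ 2 + y ^ 2 < 1 := by
    have h := Complex.sq_norm (⟨x, y⟩ : ℂ)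
    rw [Complex.normSq_mk] at h
    nlinarith [norm_nonneg (⟨x, y⟩ : ℂ)]
  have hM1 : 5 / 4 ≤ M := by linarith
  apply lt_of_pow_lt_pow_left₀ 2 (by linarith)
  have e : (1 + (⟨x, y⟩ : ℂ) + (⟨x, y⟩ : ℂ) ^ 2 / 2 - (M : ℂ))
      = ⟨1 + x + (x ^ 2 - y ^ 2) / 2 - M, y + x * y⟩ := by
    rw [show (⟨x, y⟩ : ℂ) = x + y * I from Complex.mk_eq_add_mul_I x y,
      Complex.mk_eq_add_mul_I]
    push_cast
    linear_combination (y : ℂ) ^ 2 / 2 * Complex.I_sq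
  rw [e, Complex.sq_norm, Complex.normSq_mk]
  have hK : 0 ≤ (2 * M) ^ 2 - 3 * (2 * M) + 1 := by
    nlinarith [mul_nonneg (sub_nonneg.2 hM) (show 0 ≤ M - (3 - q) / 4 by linarith)]
  have hF : 0 ≤ (2 * M - 2) * x ^ 2 + (2 * M - 3) * x + (M - 5 / 4) := by
    have h4 : 0 < 4 * (2 * M - 2) := by linarith
    refine nonneg_of_mul_nonneg_right ?_ h4
    nlinarith [sq_nonneg (2 * (2 * M - 2) * x + (2 * M - 3))]
  have hx : -1 < x := by nlinarith [sq_nonneg y]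
  have hpos : 0 < (1 - (x ^ 2 + y ^ 2)) * (M + (1 + (x ^ 2 + y ^ 2)) / 4 + x) := by
    apply mul_pos (by linarith)
    nlinarith [sq_nonneg y, sq_nonneg x]
  nlinarith [hF, hpos]
end

section
/- Let f(z) = z + Σ_{n=2}^∞ a_n zⁿ be analytic on 𝔻 and suppose Σ_{n=2}^∞ (2n − 1)|a_n| ≤ 1. Then f(z) ≠ 0 for all z ∈ 𝔻 \ {0} and f ∈ S*_car. -/
open Complex Metric

lemma mem_omegaCar_of_lt (w : ℂ) (h : 2 * ‖w - 1‖ < 1) : w ∈ omegaCar := by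
  obtain ⟨s, hs⟩ := IsAlgClosed.exists_pow_nat_eq (1 + 2 * (w - 1)) (n := 2) (by norm_num)
  obtain ⟨t, ht, hre⟩ : ∃ t : ℂ, t ^ 2 = 1 + 2 * (w - 1) ∧ 0 ≤ t.re := by
    rcases le_total 0 s.re with h0 | h0
    · exact ⟨s, hs, h0⟩
    · exact ⟨-s, by rw [neg_sq, hs], by simpa using h0⟩
  refine ⟨t - 1, ?_, ?_⟩
  · have h1 : ‖t - 1‖ * ‖t + 1‖ = 2 * ‖w - 1‖ := by
      rw [← norm_mul, show (t - 1) * (t + 1) = 2 * (w - 1) by linear_combination ht, norm_mul]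
      simp
    have h2 : 1 ≤ ‖t + 1‖ := by
      have := Complex.re_le_norm (t + 1)
      simp at this
      linarith
    nlinarith [norm_nonneg (t - 1)]
  · linear_combination (-1 / 2) * ht

theorem stmt_12 (f : ℂ → ℂ) (a : ℕ → ℂ)
    (hfd : DifferentiableOn ℂ f (Metric.ball (0 : ℂ) 1))
    (hfa : ∀ z : ℂ, ‖z‖ < 1 → f z = z + ∑' n : ℕ, a n * z ^ (n + 2))
    (hsum : Summable fun n : ℕ => (2 * ((n : ℝ) + 2) - 1) * ‖a n‖)
    (hle : ∑' n : ℕ, (2 * ((n : ℝ) + 2) - 1) * ‖a n‖ ≤ 1) :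
    (∀ z : ℂ, ‖z‖ < 1 → z ≠ 0 → f z ≠ 0) ∧ SCar f := by
  have sA : Summable fun n : ℕ => ‖a n‖ := by
    refine hsum.of_nonneg_of_le (fun n => norm_nonneg _) fun n => ?_
    have : (0 : ℝ) ≤ n := n.cast_nonneg
    nlinarith [norm_nonneg (a n), mul_nonneg this (norm_nonneg (a n))]
  have sB : Summable fun n : ℕ => ((n : ℝ) + 1) * ‖a n‖ := by
    refine hsum.of_nonneg_of_le (fun n => by positivity) fun n => ?_
    have : (0 : ℝ) ≤ n := n.cast_nonneg
    nlinarith [norm_nonneg (a n), mul_nonneg this (norm_nonneg (a n))]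
  have sC : Summable fun n : ℕ => ((n : ℝ) + 2) * ‖a n‖ :=
    (sB.add sA).congr fun n => by ring
  have hAB : 2 * (∑' n : ℕ, ((n : ℝ) + 1) * ‖a n‖) + ∑' n : ℕ, ‖a n‖ ≤ 1 := by
    rw [← tsum_mul_left, ← (sB.mul_left 2).tsum_add sA]
    refine le_trans (le_of_eq (tsum_congr fun n => ?_)) hle
    ring
  have hpow : ∀ z : ℂ, ‖z‖ < 1 → ∀ n : ℕ, ‖z‖ ^ (n + 2) ≤ ‖z‖ ^ 2 := fun z hz n =>
    pow_le_pow_of_le_one (norm_nonneg z) hz.le (by omega)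
  have bA : ∀ z : ℂ, ‖z‖ < 1 → ∀ n : ℕ, ‖a n * z ^ (n + 2)‖ ≤ ‖z‖ ^ 2 * ‖a n‖ := fun z hz n => by
    rw [norm_mul, norm_pow, mul_comm]
    exact mul_le_mul_of_nonneg_right (hpow z hz n) (norm_nonneg _)
  have bB : ∀ z : ℂ, ‖z‖ < 1 → ∀ n : ℕ,
      ‖((n : ℂ) + 1) * (a n * z ^ (n + 2))‖ ≤ ‖z‖ ^ 2 * (((n : ℝ) + 1) * ‖a n‖) := fun z hz n => by
    have h1 : ‖(n : ℂ) + 1‖ = (n : ℝ) + 1 := by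
      rw [← Nat.cast_succ, Complex.norm_natCast]; push_cast; rfl
    rw [norm_mul, h1]
    have := mul_le_mul_of_nonneg_left (bA z hz n) (by positivity : (0 : ℝ) ≤ (n : ℝ) + 1)
    linarith
  have szA : ∀ z : ℂ, ‖z‖ < 1 → Summable fun n : ℕ => a n * z ^ (n + 2) := fun z hz =>
    Summable.of_norm_bounded (sA.mul_left _) (bA z hz)
  have szB : ∀ z : ℂ, ‖z‖ < 1 → Summable fun n : ℕ => ((n : ℂ) + 1) * (a n * z ^ (n + 2)) :=
    fun z hz => Summable.of_norm_bounded (sB.mul_left _) (bB z hz)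
  have hder : ∀ z : ℂ, ‖z‖ < 1 →
      HasDerivAt f (1 + ∑' n : ℕ, a n * (((n : ℂ) + 2) * z ^ (n + 1))) z := by
    intro z hz
    have h := hasDerivAt_tsum_of_isPreconnected (𝕜 := ℂ) (t := Metric.ball (0 : ℂ) 1)
      (g := fun (n : ℕ) z => a n * z ^ (n + 2))
      (g' := fun (n : ℕ) z => a n * (((n : ℂ) + 2) * z ^ (n + 1))) (y₀ := 0) (y := z)
      sC Metric.isOpen_ball (convex_ball _ _).isPreconnected
      (fun n y _ => by
        have := (hasDerivAt_pow (n + 2) y).const_mul (a n)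
        simpa using this)
      (fun n y hy => by
        have hy1 : ‖y‖ < 1 := by simpa using hy
        have h1 : ‖(n : ℂ) + 2‖ = (n : ℝ) + 2 := by
          have : (n : ℂ) + 2 = ((n + 2 : ℕ) : ℂ) := by push_cast; rfl
          rw [this, Complex.norm_natCast]; push_cast; rfl
        rw [norm_mul, norm_mul, h1, norm_pow]
        have h2 : ‖y‖ ^ (n + 1) ≤ 1 := pow_le_one₀ (norm_nonneg _) hy1.le
        have h3 : (0 : ℝ) ≤ ((n : ℝ) + 2) * ‖a n‖ := by positivity
        nlinarith)
      (by simp) (szA 0 (by simp)) (by simpa using hz)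
    refine ((hasDerivAt_id z).add h).congr_of_eventuallyEq ?_
    filter_upwards [Metric.isOpen_ball.mem_nhds (show z ∈ Metric.ball (0 : ℂ) 1 by simpa using hz)]
      with y hy
    exact hfa y (by simpa using hy)
  have hkey : ∀ z : ℂ, ‖z‖ < 1 → z ≠ 0 → 2 * ‖z * deriv f z - f z‖ < ‖f z‖ := by
    intro z hz hz0
    have hr : 0 < ‖z‖ := norm_pos_iff.mpr hz0
    have e : z * deriv f z - f z = ∑' n : ℕ, ((n : ℂ) + 1) * (a n * z ^ (n + 2)) := by
      have e1 : z * ∑' n : ℕ, a n * (((n : ℂ) + 2) * z ^ (n + 1)) =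
          ∑' n : ℕ, ((n : ℂ) + 1) * (a n * z ^ (n + 2)) + ∑' n : ℕ, a n * z ^ (n + 2) := by
        rw [← tsum_mul_left, ← (szB z hz).tsum_add (szA z hz)]
        exact tsum_congr fun n => by ring
      rw [(hder z hz).deriv, hfa z hz, mul_add, e1]
      ring
    have n1 : ‖z * deriv f z - f z‖ ≤ ‖z‖ ^ 2 * ∑' n : ℕ, ((n : ℝ) + 1) * ‖a n‖ := by
      rw [e, ← tsum_mul_left]
      exact tsum_of_norm_bounded (sB.mul_left _).hasSum (bB z hz)
    have n2 : ‖∑' n : ℕ, a n * z ^ (n + 2)‖ ≤ ‖z‖ ^ 2 * ∑' n : ℕ, ‖a n‖ := by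
      rw [← tsum_mul_left]
      exact tsum_of_norm_bounded (sA.mul_left _).hasSum (bA z hz)
    have n3 : ‖z‖ ≤ ‖f z‖ + ‖∑' n : ℕ, a n * z ^ (n + 2)‖ := by
      have := norm_sub_le (f z) (∑' n : ℕ, a n * z ^ (n + 2))
      rwa [show f z - ∑' n : ℕ, a n * z ^ (n + 2) = z by rw [hfa z hz]; ring] at this
    have n4 := mul_le_mul_of_nonneg_left hAB (sq_nonneg ‖z‖)
    have n5 : ‖z‖ ^ 2 < ‖z‖ := by nlinarith
    linarith
  have hne : ∀ z : ℂ, ‖z‖ < 1 → z ≠ 0 → f z ≠ 0 := fun z hz hz0 h0 => by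
    have := hkey z hz hz0
    rw [h0, norm_zero] at this
    linarith [norm_nonneg (z * deriv f z - 0)]
  refine ⟨hne, hfd, ?_, ?_, hne, fun z hz hz0 => mem_omegaCar_of_lt _ ?_⟩
  · rw [hfa 0 (by simp)]; simp
  · rw [(hder 0 (by simp)).deriv]; simp
  · have hf := hne z hz hz0
    rw [div_sub_one hf, norm_div, ← mul_div_assoc, div_lt_one (norm_pos_iff.mpr hf)]
    exact hkey z hz hz0
end

section
/- Let n ≥ 2 be an integer and a ∈ ℂ, and let f_n(z) = z + a zⁿ. Then f_n ∈ S*_car if and only if |a| ≤ 1/(2n − 1). -/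
open Complex Metric

lemma mem_omegaCar_aux (w : ℂ) (h : ‖2 * w - 2‖ < 1) : w ∈ omegaCar := by
  have key : ∀ p : ℂ, p ^ 2 = 2 * w - 1 → 0 ≤ p.re → w ∈ omegaCar := by
    intro p hp hre
    refine ⟨p - 1, ?_, ?_⟩
    · have h1 : (p - 1) * (p + 1) = 2 * w - 2 := by linear_combination hp
      rw [← h1, norm_mul] at h
      have h2 : (1 : ℝ) ≤ ‖p + 1‖ := by
        have := Complex.re_le_norm (p + 1)
        simp at this
        linarith
      nlinarith [norm_nonneg (p - 1)]
    · linear_combination (-1 / 2 : ℂ) * hp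
  obtain ⟨p, hp⟩ := IsAlgClosed.exists_pow_nat_eq (2 * w - 1) (n := 2) (by norm_num)
  rcases le_total 0 p.re with h0 | h0
  · exact key p hp h0
  · exact key (-p) (by rw [neg_sq, hp]) (by simpa using h0)

lemma deriv_aux (k : ℕ) (a z : ℂ) :
    deriv (fun z : ℂ => z + a * z ^ (k + 2)) z = 1 + (k + 2) * (a * z ^ (k + 1)) := by
  have h := (hasDerivAt_id z).add ((hasDerivAt_pow (k + 2) z).const_mul a)
  have h2 := h.deriv
  simp only [Nat.add_succ_sub_one] at h2
  refine Eq.trans h2 ?_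
  push_cast
  ring

theorem stmt_13 (n : ℕ) (hn : 2 ≤ n) (a : ℂ) :
    SCar (fun z : ℂ => z + a * z ^ n) ↔ ‖a‖ ≤ 1 / (2 * (n : ℝ) - 1) := by
  obtain ⟨k, rfl⟩ : ∃ k, n = k + 2 := ⟨n - 2, by omega⟩
  have hk : (0 : ℝ) ≤ k := Nat.cast_nonneg k
  have hm : (2 * ((k + 2 : ℕ) : ℝ) - 1) = 2 * k + 3 := by push_cast; ring
  rw [hm]
  have hm0 : (0 : ℝ) < 2 * k + 3 := by linarith
  have hmC : (2 * k + 3 : ℂ) ≠ 0 := by exact_mod_cast hm0.ne'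
  have hkC : (k + 1 : ℂ) ≠ 0 := by exact_mod_cast Nat.succ_ne_zero k
  constructor
  · rintro ⟨-, -, -, -, h⟩
    by_contra! hlt
    have ha : 0 < ‖a‖ := lt_trans (by positivity) hlt
    have ha0 : a ≠ 0 := norm_pos_iff.mp ha
    obtain ⟨z, hz⟩ := IsAlgClosed.exists_pow_nat_eq (-1 / ((2 * k + 3) * a) : ℂ)
      (n := k + 1) (by omega)
    have hz0 : z ≠ 0 := by
      rintro rfl
      rw [zero_pow (by omega)] at hz
      have : (-1 / ((2 * k + 3) * a) : ℂ) ≠ 0 :=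
        div_ne_zero (by norm_num) (mul_ne_zero hmC ha0)
      exact this hz.symm
    have ht : (2 * k + 3) * (a * z ^ (k + 1)) = -1 := by
      rw [hz]; field_simp
    have hz1 : ‖z‖ < 1 := by
      by_contra! hge
      have h1 : 1 ≤ ‖z‖ ^ (k + 1) := one_le_pow₀ hge
      have h2 := congrArg norm ht
      have h3 : ‖(2 * k + 3 : ℂ)‖ = 2 * k + 3 := by
        have : (2 * k + 3 : ℂ) = ((2 * k + 3 : ℝ) : ℂ) := by push_cast; ring
        rw [this, Complex.norm_real, Real.norm_of_nonneg hm0.le]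
      rw [norm_mul, norm_mul, norm_pow, h3, norm_neg, norm_one] at h2
      rw [div_lt_iff₀ hm0] at hlt
      nlinarith
    obtain ⟨u, hu, he⟩ := h z hz1 hz0
    rw [deriv_aux] at he
    set t := a * z ^ (k + 1) with htdef
    have hf : z + a * z ^ (k + 2) = z * (1 + t) := by rw [htdef]; ring
    simp only [hf] at he
    have ht1 : 1 + t ≠ 0 := by
      intro h0
      have : (2 : ℂ) * (k + 1) = 0 := by linear_combination (2 * k + 3) * h0 - ht
      exact (mul_ne_zero two_ne_zero hkC) this
    rw [mul_div_mul_left _ _ hz0, div_eq_iff ht1] at he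
    have h5 : (u + 1) ^ 2 * (1 + t) = 0 := by linear_combination (-2) * he + ht
    have h6 : u + 1 = 0 := by simpa [ht1] using h5
    have h7 : u = -1 := by linear_combination h6
    rw [h7] at hu
    simp at hu
  · intro ha
    rw [le_div_iff₀ hm0] at ha
    have hT : ∀ z : ℂ, ‖z‖ < 1 → ‖a * z ^ (k + 1)‖ * (2 * k + 3) < 1 := by
      intro z hz
      have h1 : ‖z‖ ^ (k + 1) < 1 := pow_lt_one₀ (norm_nonneg z) hz (by omega)
      have h2 : 0 ≤ ‖z‖ ^ (k + 1) := by positivity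
      rw [norm_mul, norm_pow]
      nlinarith
    have hN : ∀ t : ℂ, 1 - ‖t‖ ≤ ‖1 + t‖ := by
      intro t
      have := norm_sub_norm_le (1 : ℂ) (-t)
      simpa using this
    have hne : ∀ z : ℂ, ‖z‖ < 1 → 1 + a * z ^ (k + 1) ≠ 0 := by
      intro z hz
      have h1 := hT z hz
      have h2 := hN (a * z ^ (k + 1))
      rw [← norm_pos_iff]
      nlinarith [norm_nonneg (a * z ^ (k + 1))]
    have hf : ∀ z : ℂ, z + a * z ^ (k + 2) = z * (1 + a * z ^ (k + 1)) := by
      intro z; ring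
    refine ⟨?_, ?_, ?_, ?_, ?_⟩
    · fun_prop
    · simp
    · rw [deriv_aux]; simp
    · intro z hz hz0
      simp only [hf]
      exact mul_ne_zero hz0 (hne z hz)
    · intro z hz hz0
      rw [deriv_aux]
      simp only [hf]
      have h1 := hT z hz
      have h2 := hN (a * z ^ (k + 1))
      have h3 := hne z hz
      generalize a * z ^ (k + 1) = t at *
      rw [mul_div_mul_left _ _ hz0]
      apply mem_omegaCar_aux
      have h4 : 2 * ((1 + (k + 2) * t) / (1 + t)) - 2 = (((2 * k + 2 : ℝ) : ℂ) * t) / (1 + t) := by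
        push_cast
        field_simp
        ring
      rw [h4, norm_div, norm_mul, Complex.norm_real, Real.norm_of_nonneg (by linarith),
        div_lt_one (norm_pos_iff.mpr h3)]
      linarith
end

section
/- Let f ∈ S*_car, let a₂ = f''(0)/2, and let f₂(z) = z + a₂ z² be the second partial sum of f. Then: (i) f₂(z) ≠ 0 and Re(z f₂'(z)/f₂(z)) > 0 for all z with 0 < |z| < 1/2 (f₂ is starlike in |z| < 1/2); (ii) f₂'(z) ≠ 0 and Re(1 + z f₂''(z)/f₂'(z)) > 0 for all z with |z| < 1/4 (f₂ is convex in |z| < 1/4); (iii) for every 0 < ρ ≤ 1/3 the function z ↦ f₂(ρz)/ρ = z + a₂ρ z² belongs to S*_car. -/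
open Complex Metric

/-- The second coefficient of a function of the class is at most one in modulus. -/
theorem coeff_two_le (f : ℂ → ℂ) (hf : SCar f) : ‖deriv (deriv f) 0 / 2‖ ≤ 1 := by
  obtain ⟨hd, h0, h1, hne, hmem⟩ := hf
  have hball : Metric.ball (0 : ℂ) 1 ∈ nhds (0 : ℂ) := Metric.ball_mem_nhds _ one_pos
  have hd' : DifferentiableOn ℂ (deriv f) (Metric.ball 0 1) := hd.deriv Metric.isOpen_ball
  set g := dslope f 0 with hgdef
  have hgd : DifferentiableOn ℂ g (Metric.ball 0 1) :=
    (Complex.differentiableOn_dslope hball).2 hd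
  have hgd' : DifferentiableOn ℂ (deriv g) (Metric.ball 0 1) := hgd.deriv Metric.isOpen_ball
  have hg0 : g 0 = 1 := by rw [hgdef, dslope_same, h1]
  have hfg : ∀ z, f z = z * g z := by
    intro z
    have := sub_smul_dslope f 0 z
    simpa [h0, smul_eq_mul] using this.symm
  have hgne : ∀ z ∈ Metric.ball (0 : ℂ) 1, g z ≠ 0 := by
    intro z hz hgz
    by_cases hz0 : z = 0
    · rw [hz0, hg0] at hgz; exact one_ne_zero hgz
    · exact hne z (by simpa using hz) hz0 (by rw [hfg, hgz, mul_zero])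
  -- second derivative
  have hf' : deriv f =ᶠ[nhds 0] fun z => g z + z * deriv g z := by
    filter_upwards [hball] with z hz
    have hgz : HasDerivAt g (deriv g z) z :=
      (hgd.differentiableAt (Metric.isOpen_ball.mem_nhds hz)).hasDerivAt
    have h2 := (hasDerivAt_id z).mul hgz
    have h3 : f = (id * g) := by funext w; simp [hfg w]
    rw [h3, h2.deriv]; simp
  have hg0d : HasDerivAt g (deriv g 0) 0 := (hgd.differentiableAt hball).hasDerivAt
  have hf2 : deriv (deriv f) 0 = 2 * deriv g 0 := by
    rw [hf'.deriv_eq]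
    have hg1 : HasDerivAt (deriv g) (deriv (deriv g) 0) 0 :=
      (hgd'.differentiableAt hball).hasDerivAt
    have h2 := hg0d.add ((hasDerivAt_id (0 : ℂ)).mul hg1)
    have h3 : (fun z => g z + z * deriv g z) = g + id * deriv g := by funext w; simp
    rw [h3, h2.deriv]; simp; ring
  -- the function p
  set p : ℂ → ℂ := fun z => deriv f z / g z with hp
  have hpd : DifferentiableOn ℂ p (Metric.ball 0 1) := hd'.div hgd hgne
  have hp0 : p 0 = 1 := by simp [hp, h1, hg0]
  have hpmem : ∀ z ∈ Metric.ball (0 : ℂ) 1, ∃ u : ℂ, ‖u‖ < 1 ∧ p z = 1 + u + u ^ 2 / 2 := by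
    intro z hz
    by_cases hz0 : z = 0
    · exact ⟨0, by simp, by rw [hz0, hp0]; simp⟩
    · obtain ⟨u, hu, hw⟩ := hmem z (by simpa using hz) hz0
      refine ⟨u, hu, ?_⟩
      rw [← hw, hfg z, mul_div_mul_left _ _ hz0]
  have hpder : HasDerivAt p (deriv g 0) 0 := by
    have h2 := ((hd'.differentiableAt hball).hasDerivAt).div hg0d (by rw [hg0]; exact one_ne_zero)
    rw [hf2, hg0, h1] at h2
    refine h2.congr_deriv ?_
    ring
  have hre : ∀ u : ℂ, ‖u‖ < 1 → 0 < (1 + u).re := by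
    intro u hu
    have := (abs_lt.1 ((Complex.abs_re_le_norm u).trans_lt hu)).1
    simp; linarith
  have hsq : ∀ z ∈ Metric.ball (0 : ℂ) 1, ∃ u : ℂ, ‖u‖ < 1 ∧ 2 * p z - 1 = (1 + u) ^ 2 := by
    intro z hz
    obtain ⟨u, hu, h⟩ := hpmem z hz
    exact ⟨u, hu, by rw [h]; ring⟩
  have hslit : ∀ z ∈ Metric.ball (0 : ℂ) 1, 2 * p z - 1 ∈ Complex.slitPlane := by
    intro z hz
    obtain ⟨u, hu, h⟩ := hsq z hz
    have hr := hre u hu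
    rw [h, Complex.mem_slitPlane_iff]
    by_cases hi : (1 + u).im = 0
    · left
      rw [sq, Complex.mul_re, hi]; nlinarith
    · right
      rw [sq, Complex.mul_im]
      intro h'
      have : (1 + u).re * (1 + u).im = 0 := by linarith
      rcases mul_eq_zero.1 this with h'' | h''
      · exact hr.ne' h''
      · exact hi h''
  set v : ℂ → ℂ := fun z => (2 * p z - 1) ^ (2⁻¹ : ℂ) - 1 with hv
  have hvd : DifferentiableOn ℂ v (Metric.ball 0 1) :=
    (((hpd.const_mul 2).sub_const 1).cpow_const hslit).sub_const 1
  have hv0 : v 0 = 0 := by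
    simp only [hv, hp0]; norm_num
  have hvmaps : Set.MapsTo v (Metric.ball 0 1) (Metric.closedBall (v 0) 1) := by
    intro z hz
    obtain ⟨u, hu, h⟩ := hsq z hz
    have : v z = u := by
      simp only [hv]; rw [h, Complex.sq_cpow_two_inv (hre u hu)]; ring
    rw [hv0, this]; simpa using hu.le
  have hs := Complex.norm_deriv_le_one_of_mapsTo_ball hvd hvmaps one_pos
  have hvder : HasDerivAt v (deriv g 0) 0 := by
    have h2 := (((hpder.const_mul 2).sub_const 1).cpow_const (c := (2⁻¹ : ℂ))
      (hslit 0 (by simp))).sub_const 1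
    refine h2.congr_deriv ?_
    rw [hp0]
    norm_num
    ring
  rw [hvder.deriv] at hs
  rw [hf2]
  simpa using hs

theorem re_two_sub_inv (w : ℂ) (hw : ‖w‖ < 1 / 2) :
    1 + w ≠ 0 ∧ 0 < (2 - 1 / (1 + w)).re := by
  have h1 : 1 / 2 < ‖1 + w‖ := by
    have := norm_sub_le (1 + w) w
    simp only [add_sub_cancel_right, norm_one] at this
    linarith
  refine ⟨norm_pos_iff.1 (by linarith), ?_⟩
  have h2 : ‖1 / (1 + w)‖ < 2 := by
    rw [norm_div, norm_one, div_lt_iff₀ (by linarith)]; linarith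
  have h3 := (Complex.re_le_norm (1 / (1 + w)))
  rw [Complex.sub_re]
  have : (2 : ℂ).re = 2 := rfl
  linarith

theorem mem_omegaCar_of_norm_lt (q : ℂ) (hq : ‖q‖ < 1 / 2) : 1 + q ∈ omegaCar := by
  obtain ⟨s, hs⟩ : ∃ s : ℂ, s ^ 2 = 1 + 2 * q :=
    ⟨(1 + 2 * q) ^ (((2 : ℕ) : ℂ)⁻¹), Complex.cpow_nat_inv_pow _ two_ne_zero⟩
  by_cases h : ‖s - 1‖ < 1
  · exact ⟨s - 1, h, by linear_combination (-1 / 2 : ℂ) * hs⟩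
  · refine ⟨-s - 1, ?_, by linear_combination (-1 / 2 : ℂ) * hs⟩
    have h1 : ‖s - 1‖ * ‖-s - 1‖ = 2 * ‖q‖ := by
      rw [← norm_mul, show (s - 1) * (-s - 1) = -(2 * q) by linear_combination -hs]
      simp
    push Not at h
    nlinarith [norm_nonneg (-s - 1)]

theorem deriv_quad (a z : ℂ) : deriv (fun w : ℂ => w + a * w ^ 2) z = 1 + 2 * a * z := by
  have h := (hasDerivAt_id z).add (((hasDerivAt_id z).pow 2).const_mul a)
  refine HasDerivAt.deriv (h.congr_deriv ?_)
  simp; ring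

theorem stmt_14 (f : ℂ → ℂ) (hf : SCar f) (a₂ : ℂ) (ha₂ : a₂ = deriv (deriv f) 0 / 2) :
    (∀ z : ℂ, 0 < ‖z‖ → ‖z‖ < 1 / 2 →
      z + a₂ * z ^ 2 ≠ 0 ∧
      0 < (z * deriv (fun w : ℂ => w + a₂ * w ^ 2) z / (z + a₂ * z ^ 2)).re) ∧
    (∀ z : ℂ, ‖z‖ < 1 / 4 →
      deriv (fun w : ℂ => w + a₂ * w ^ 2) z ≠ 0 ∧
      0 < (1 + z * deriv (deriv (fun w : ℂ => w + a₂ * w ^ 2)) z /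
        deriv (fun w : ℂ => w + a₂ * w ^ 2) z).re) ∧
    (∀ ρ : ℝ, 0 < ρ → ρ ≤ 1 / 3 → SCar (fun z : ℂ => z + a₂ * (ρ : ℂ) * z ^ 2)) := by
  have ha : ‖a₂‖ ≤ 1 := by rw [ha₂]; exact coeff_two_le f hf
  have key : ∀ z w : ℂ, z ≠ 0 → 1 + w ≠ 0 → ∀ b : ℂ, w = b * z →
      z * (1 + 2 * b * z) / (z + b * z ^ 2) = 2 - 1 / (1 + w) := by
    intro z w hz hw b hb
    have h1 : z + b * z ^ 2 = z * (1 + w) := by rw [hb]; ring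
    rw [h1, mul_div_mul_left _ _ hz]
    field_simp
    rw [hb]; ring
  refine ⟨?_, ?_, ?_⟩
  · intro z hz0 hz
    have hz0' : z ≠ 0 := norm_pos_iff.1 hz0
    have hw : ‖a₂ * z‖ < 1 / 2 := by
      rw [norm_mul]; nlinarith
    obtain ⟨h1, h2⟩ := re_two_sub_inv _ hw
    rw [deriv_quad, key z _ hz0' h1 a₂ rfl]
    refine ⟨?_, h2⟩
    rw [show z + a₂ * z ^ 2 = z * (1 + a₂ * z) by ring]
    exact mul_ne_zero hz0' h1
  · intro z hz
    have hw : ‖2 * a₂ * z‖ < 1 / 2 := by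
      rw [norm_mul, norm_mul, Complex.norm_two]; nlinarith [norm_nonneg z]
    obtain ⟨h1, h2⟩ := re_two_sub_inv _ hw
    have hdd : deriv (deriv (fun w : ℂ => w + a₂ * w ^ 2)) z = 2 * a₂ := by
      rw [show deriv (fun w : ℂ => w + a₂ * w ^ 2) = fun z => 1 + 2 * a₂ * z from
        funext (deriv_quad a₂)]
      have h := ((hasDerivAt_id z).const_mul (2 * a₂)).const_add 1
      exact HasDerivAt.deriv (h.congr_deriv (by simp))
    rw [hdd, deriv_quad]
    refine ⟨h1, ?_⟩
    rw [show 1 + z * (2 * a₂) / (1 + 2 * a₂ * z) = 2 - 1 / (1 + 2 * a₂ * z) by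
      rw [eq_sub_iff_add_eq, add_assoc, ← add_div,
        show z * (2 * a₂) + 1 = 1 + 2 * a₂ * z by ring, div_self h1]
      norm_num]
    exact h2
  · intro ρ hρ hρ'
    have hb : ‖a₂ * (ρ : ℂ)‖ ≤ 1 / 3 := by
      rw [norm_mul, Complex.norm_real, Real.norm_of_nonneg hρ.le]; nlinarith [norm_nonneg a₂]
    have hw : ∀ z : ℂ, ‖z‖ < 1 → ‖a₂ * (ρ : ℂ) * z‖ < 1 / 3 := by
      intro z hz
      rw [norm_mul]; nlinarith [norm_nonneg z]
    have hw' : ∀ z : ℂ, ‖z‖ < 1 → 1 + a₂ * (ρ : ℂ) * z ≠ 0 := fun z hz =>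
      (re_two_sub_inv _ ((hw z hz).trans (by norm_num))).1
    refine ⟨by fun_prop, by simp, by rw [deriv_quad]; simp, ?_, ?_⟩
    · intro z hz hz0
      change z + a₂ * (ρ : ℂ) * z ^ 2 ≠ 0
      rw [show z + a₂ * (ρ : ℂ) * z ^ 2 = z * (1 + a₂ * (ρ : ℂ) * z) by ring]
      exact mul_ne_zero hz0 (hw' z hz)
    · intro z hz hz0
      rw [deriv_quad, key z _ hz0 (hw' z hz) _ rfl]
      have h3 := hw z hz
      have h4 := hw' z hz
      generalize a₂ * (ρ : ℂ) * z = w at h3 h4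
      rw [show 2 - 1 / (1 + w) = 1 + w / (1 + w) by field_simp; ring]
      apply mem_omegaCar_of_norm_lt
      have h5 : 2 / 3 < ‖1 + w‖ := by
        have := norm_sub_le (1 + w) w
        simp only [add_sub_cancel_right, norm_one] at this
        linarith
      rw [norm_div, div_lt_iff₀ (by linarith)]
      linarith
end
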